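/- arXiv:2302.02995 — 3 statements merged into one kernel-verified Lean document; each statement's English description precedes it below -/
import Mathlib

section
/- Every finite simple graph of pathwidth strictly less than a that contains no path on 2^b vertices as a subgraph has treedepth at most 10ab (for all positive integers a, b). -/
/-- `G` contains a path on `ℓ` vertices as a subgraph: `ℓ` distinct vertices with
consecutive ones adjacent. -/
def HasPathOn {V : Type*} (G : SimpleGraph V) (ℓ : ℕ) : Prop :=
  ∃ f : Fin ℓ → V, Function.Injective f ∧
    ∀ (i : ℕ) (h : i + 1 < ℓ), G.Adj (f ⟨i, Nat.lt_of_succ_lt h⟩) (f ⟨i + 1, h⟩)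

/-- A forest order: a partial order in which the set of ancestors (predecessors)
of every element is a chain. Forest orders correspond to rooted forests, where
`le u v` means `u` is an ancestor of `v` (or `u = v`). -/
def IsForestOrder {V : Type*} (le : V → V → Prop) : Prop :=
  (∀ v, le v v) ∧ (∀ u v, le u v → le v u → u = v) ∧
  (∀ u v w, le u v → le v w → le u w) ∧
  (∀ u w v, le u v → le w v → le u w ∨ le w u)

/-- An elimination forest of `G`: a rooted forest on the vertices of `G` such that
for every edge, one endpoint is an ancestor of the other. -/
def IsElimForest {V : Type*} (G : SimpleGraph V) (le : V → V → Prop) : Prop :=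
  IsForestOrder le ∧ ∀ u v, G.Adj u v → le u v ∨ le v u

/-- The height of a rooted forest: the maximum number of vertices on a
root-to-leaf path, i.e. the maximum size of a set of ancestors of a vertex. -/
noncomputable def forestHeight {V : Type*} (le : V → V → Prop) : ℕ :=
  ⨆ v, {u | le u v}.ncard

/-- Treedepth: the minimum height of an elimination forest. -/
noncomputable def treedepth {V : Type*} (G : SimpleGraph V) : ℕ :=
  sInf { n | ∃ le : V → V → Prop, IsElimForest G le ∧ forestHeight le = n }

/-- A path decomposition of `G`: bags indexed by the nodes `0, …, n-1` of a path,
covering all vertices and edges, such that the set of bags containing any fixed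
vertex forms a non-empty interval. -/
structure PathDecomp {V : Type*} (G : SimpleGraph V) where
  n : ℕ
  bag : Fin n → Set V
  mem_bag : ∀ v : V, ∃ t, v ∈ bag t
  edge_bag : ∀ u v : V, G.Adj u v → ∃ t, u ∈ bag t ∧ v ∈ bag t
  convex : ∀ (v : V) (s u t : Fin n), s ≤ u → u ≤ t → v ∈ bag s → v ∈ bag t → v ∈ bag u

/-- The width of a path decomposition: maximum bag size minus 1. -/
noncomputable def PathDecomp.width {V : Type*} {G : SimpleGraph V} (D : PathDecomp G) : ℕ :=
  (⨆ t, (D.bag t).ncard) - 1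

/-- Pathwidth: the minimum width of a path decomposition. -/
noncomputable def pathwidth {V : Type*} (G : SimpleGraph V) : ℕ :=
  sInf { w | ∃ D : PathDecomp G, D.width = w }

/- A layout of width `w` places the vertices one after another so that at each time at most `w`
placed vertices (the adhesion) have neighbours still to come; a path decomposition with bags of size
at most `a` gives a layout of width `a`. Among the layouts of a given width, a minimal one is
linked: by Menger's theorem, over any stretch of time in which all adhesions have at least `j`
elements there are `j` disjoint paths crossing it. As no path has `2 ^ b` vertices, these paths have
fewer than `2 ^ (2 * b)` vertices in total if `a < 2 ^ b`, so `2 * b + O(1)` rounds of binary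
search, each deleting an adhesion with at most `2 * j` elements, cut the stretch into pieces of two
kinds. In a piece during which no path vertex leaves the adhesion, `j` vertices outside the piece
lie in every adhesion, so that the piece has width `w - j`; in the other pieces all adhesions have
more than `2 * j` elements, so that `j` has more than doubled. In both cases the potential
`2 * w - j` drops by at least `j`, which pays for the `O(j * b)` deleted vertices. If `a ≥ 2 ^ b`,
a depth-first search tree, whose height is less than `2 ^ b`, is already shallow enough. -/

section ElimDepth

variable {V : Type*} {G : SimpleGraph V} {S T : Finset V} {n m : ℕ}

/-- An elimination forest of height at most `n` of the subgraph of `G` induced on `S`, encoded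
as an order on the whole vertex set in which the vertices outside `S` are isolated. -/
structure IsElimForestOn (G : SimpleGraph V) (S : Finset V) (n : ℕ) (le : V → V → Prop) :
    Prop where
  isForestOrder : IsForestOrder le
  eq_or_mem : ∀ u v, le u v → u = v ∨ u ∈ S ∧ v ∈ S
  adj : ∀ u ∈ S, ∀ v ∈ S, G.Adj u v → le u v ∨ le v u
  ncard_le : ∀ v ∈ S, {u | le u v}.ncard ≤ n

theorem isElimForestOn_empty : IsElimForestOn G ∅ n Eq where
  isForestOrder := by simp +contextual [IsForestOrder]
  eq_or_mem _ _ := .inl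
  adj := by simp
  ncard_le := by simp

variable [DecidableEq V]

theorem IsElimForestOn.insert_root {le : V → V → Prop} (h : IsElimForestOn G S n le) {r : V}
    (hr : r ∉ S) :
    IsElimForestOn G (insert r S) (n + 1) fun u v ↦ u = r ∧ v ∈ S ∨ le u v := by
  obtain ⟨⟨hrefl, hantisymm, htrans, hchain⟩, hmem, hadj, hcard⟩ := h
  refine ⟨⟨?_, ?_, ?_, ?_⟩, ?_, ?_, fun v hv ↦ ?_⟩
  iterate 6 grind
  rcases Finset.mem_insert.1 hv with rfl | hvS
  · have : {u | u = v ∧ v ∈ S ∨ le u v} ⊆ {v} := by grind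
    exact (Set.ncard_le_ncard this).trans (by simp)
  · have : {u | u = r ∧ v ∈ S ∨ le u v} = insert r {u | le u v} := by grind
    rw [this]
    exact (Set.ncard_insert_le r _).trans (Nat.succ_le_succ (hcard v hvS))

theorem IsElimForestOn.union {le le' : V → V → Prop} (h : IsElimForestOn G S n le)
    (h' : IsElimForestOn G T n le') (hdisj : Disjoint S T)
    (hST : ∀ u ∈ S, ∀ v ∈ T, ¬ G.Adj u v) :
    IsElimForestOn G (S ∪ T) n fun u v ↦ le u v ∨ le' u v := by
  obtain ⟨⟨hrefl, hantisymm, htrans, hchain⟩, hmem, hadj, hcard⟩ := h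
  obtain ⟨⟨hrefl', hantisymm', htrans', hchain'⟩, hmem', hadj', hcard'⟩ := h'
  have hdisj' : ∀ u ∈ S, u ∉ T := fun _ hu ↦ Finset.disjoint_left.1 hdisj hu
  have hTS : ∀ u ∈ S, ∀ v ∈ T, ¬ G.Adj v u := fun u hu v hv huv ↦ hST u hu v hv huv.symm
  refine ⟨⟨?_, ?_, ?_, ?_⟩, ?_, ?_, fun v hv ↦ ?_⟩
  iterate 6 grind
  rcases Finset.mem_union.1 hv with hvS | hvT
  · have : {u | le u v ∨ le' u v} = {u | le u v} := by grind
    exact this ▸ hcard v hvS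
  · have : {u | le u v ∨ le' u v} = {u | le' u v} := by grind
    exact this ▸ hcard' v hvT

/-- `ElimDepthLE G S n` says that the subgraph of `G` induced on `S` has treedepth at most `n`,
via the recursive characterisation of treedepth: delete a vertex at cost one, or treat two
mutually non-adjacent parts separately at no cost. -/
inductive ElimDepthLE (G : SimpleGraph V) : Finset V → ℕ → Prop
  | empty (n : ℕ) : ElimDepthLE G ∅ n
  | insert {S : Finset V} {n : ℕ} (v : V) : ElimDepthLE G S n → ElimDepthLE G (insert v S) (n + 1)
  | union {S T : Finset V} {n : ℕ} : Disjoint S T → (∀ u ∈ S, ∀ v ∈ T, ¬ G.Adj u v) →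
      ElimDepthLE G S n → ElimDepthLE G T n → ElimDepthLE G (S ∪ T) n

theorem ElimDepthLE.mono (h : ElimDepthLE G S n) (hnm : n ≤ m) : ElimDepthLE G S m := by
  induction h generalizing m with
  | empty => exact .empty m
  | insert v _ ih =>
    obtain ⟨m, rfl⟩ := Nat.exists_eq_add_of_le' (Nat.le_of_add_left_le hnm)
    exact .insert v (ih (Nat.le_of_succ_le_succ hnm))
  | union hdisj hadj _ _ ihS ihT => exact .union hdisj hadj (ihS hnm) (ihT hnm)

theorem ElimDepthLE.subset (h : ElimDepthLE G S n) (hTS : T ⊆ S) : ElimDepthLE G T n := by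
  induction h generalizing T with
  | empty => exact Finset.subset_empty.1 hTS ▸ .empty _
  | insert v _ ih =>
    by_cases hv : v ∈ T
    · rw [← Finset.insert_erase hv]
      exact .insert v (ih (Finset.subset_insert_iff.1 hTS))
    · exact (ih ((Finset.subset_insert_iff_of_notMem hv).1 hTS)).mono (Nat.le_succ _)
  | @union S U _ hdisj hadj _ _ ihS ihU =>
    rw [← Finset.inter_eq_left.2 hTS, Finset.inter_union_distrib_left]
    refine .union (hdisj.mono Finset.inter_subset_right Finset.inter_subset_right)
      (fun u hu v hv ↦ ?_) (ihS Finset.inter_subset_right) (ihU Finset.inter_subset_right)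
    exact hadj u (Finset.mem_of_mem_inter_right hu) v (Finset.mem_of_mem_inter_right hv)

theorem ElimDepthLE.union_left (h : ElimDepthLE G S n) (X : Finset V) :
    ElimDepthLE G (X ∪ S) (n + X.card) := by
  induction X using Finset.induction_on with
  | empty => simpa using h
  | insert v X hv ih =>
    rw [Finset.insert_union, Finset.card_insert_of_notMem hv, ← add_assoc]
    exact .insert v ih

theorem elimDepthLE_one_of_subsingleton (hS : (S : Set V).Subsingleton) : ElimDepthLE G S 1 := by
  rcases S.eq_empty_or_nonempty with rfl | ⟨v, hv⟩
  · exact .empty 1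
  · exact (ElimDepthLE.insert v (.empty 0)).subset fun u hu ↦ by simp [hS hu hv]

theorem ElimDepthLE.exists_isElimForestOn (h : ElimDepthLE G S n) :
    ∃ le, IsElimForestOn G S n le := by
  induction h with
  | empty n => exact ⟨Eq, isElimForestOn_empty⟩
  | @insert S n v _ ih =>
    obtain ⟨le, h⟩ := ih
    by_cases hv : v ∈ S
    · rw [Finset.insert_eq_of_mem hv]
      exact ⟨le, h.1, h.2, h.3, fun u hu ↦ (h.4 u hu).trans (Nat.le_succ n)⟩
    · exact ⟨_, h.insert_root hv⟩
  | union hdisj hadj _ _ ihS ihT =>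
    obtain ⟨le, h⟩ := ihS
    obtain ⟨le', h'⟩ := ihT
    exact ⟨_, h.union h' hdisj hadj⟩

theorem ElimDepthLE.treedepth_le [Fintype V] (h : ElimDepthLE G Finset.univ n) :
    treedepth G ≤ n := by
  obtain ⟨le, hle⟩ := h.exists_isElimForestOn
  have helim : IsElimForest G le :=
    ⟨hle.isForestOrder, fun u v ↦ hle.adj u (Finset.mem_univ u) v (Finset.mem_univ v)⟩
  calc treedepth G ≤ forestHeight le := Nat.sInf_le ⟨le, helim, rfl⟩
    _ ≤ n := ciSup_le' fun v ↦ hle.ncard_le v (Finset.mem_univ v)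

end ElimDepth

section LongPaths

variable {V : Type*} {G : SimpleGraph V}

theorem length_lt_of_not_hasPathOn {N : ℕ} (hN : ¬ HasPathOn G N) {l : List V}
    (hchain : l.IsChain G.Adj) (hnodup : l.Nodup) : l.length < N := by
  by_contra! hle
  refine hN ⟨fun i ↦ l[i.1]'(i.2.trans_le hle), fun i j hij ↦ ?_, fun i hi ↦ ?_⟩
  · exact Fin.ext ((List.Nodup.getElem_inj_iff hnodup).1 hij)
  · exact hchain.getElem i (hi.trans_le hle)

variable [DecidableEq V]

-- Depth-first search: once `S` is connected, delete a root `r ∈ R` and continue with the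
-- neighbours of `r` as the new roots; every path from a new root extends to one from `r`.
theorem elimDepthLE_of_forall_path_length_le {S : Finset V} {R : Set V} {n : ℕ}
    (hR : ∀ T ⊆ S, T.Nonempty → (∀ u ∈ T, ∀ v ∈ S \ T, ¬ G.Adj u v) → ∃ r ∈ T, r ∈ R)
    (hlen : ∀ r ∈ R, ∀ l : List V, (r :: l).IsChain G.Adj → (r :: l).Nodup →
      (∀ v ∈ r :: l, v ∈ S) → (r :: l).length ≤ n) :
    ElimDepthLE G S n := by
  induction hk : S.card using Nat.strong_induction_on generalizing S R n with
  | _ k ih =>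
  subst hk
  rcases S.eq_empty_or_nonempty with rfl | hne
  · exact .empty n
  by_cases hsplit : ∃ T ⊂ S, T.Nonempty ∧ ∀ u ∈ T, ∀ v ∈ S \ T, ¬ G.Adj u v
  · obtain ⟨T, hTS, hTne, hadj⟩ := hsplit
    have hadj' : ∀ u ∈ S \ T, ∀ v ∈ T, ¬ G.Adj u v := fun u hu v hv huv ↦ hadj v hv u hu huv.symm
    rw [← Finset.union_sdiff_of_subset hTS.subset]
    refine .union Finset.disjoint_sdiff hadj ?_ ?_
    · refine ih _ (Finset.card_lt_card hTS) (R := R) (fun U hU hUne hUadj ↦ ?_)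
        (fun r hr l hc hn hl ↦ hlen r hr l hc hn fun v hv ↦ hTS.subset (hl v hv)) rfl
      exact hR U (hU.trans hTS.subset) hUne (by grind)
    · refine ih _ (Finset.card_lt_card (Finset.sdiff_ssubset hTS.subset hTne)) (R := R)
        (fun U hU hUne hUadj ↦ ?_)
        (fun r hr l hc hn hl ↦ hlen r hr l hc hn fun v hv ↦ Finset.sdiff_subset (hl v hv)) rfl
      exact hR U (hU.trans Finset.sdiff_subset) hUne (by grind)
  · obtain ⟨r, hrS, hrR⟩ := hR S subset_rfl hne (by simp)
    obtain ⟨n, rfl⟩ : ∃ m, n = m + 1 :=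
      Nat.exists_eq_add_of_le' (hlen r hrR [] (by simp) (by simp) (by simpa using hrS))
    rw [← Finset.insert_erase hrS]
    refine .insert r (ih _ (Finset.card_erase_lt_of_mem hrS) (R := {v | G.Adj r v}) ?_ ?_ rfl)
    · intro T hT hTne hTadj
      by_contra! hr
      have hrT : ∀ u ∈ T, ¬ G.Adj u r := fun u hu hur ↦ hr u hu hur.symm
      exact hsplit ⟨T, (Finset.subset_erase.1 hT).1.ssubset_of_mem_notMem hrS
        (Finset.subset_erase.1 hT).2, hTne, by grind⟩
    · intro v hrv l hchain hnodup hl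
      have := hlen r hrR (v :: l) (.cons_cons hrv hchain) (by grind) (by grind)
      simpa using this

theorem elimDepthLE_of_not_hasPathOn {N : ℕ} (hN : ¬ HasPathOn G N) (S : Finset V) :
    ElimDepthLE G S (N - 1) :=
  elimDepthLE_of_forall_path_length_le (R := Set.univ) (fun _ _ ⟨r, hr⟩ _ ↦ ⟨r, hr, trivial⟩)
    fun _ _ _ hchain hnodup _ ↦ Nat.le_pred_of_lt (length_lt_of_not_hasPathOn hN hchain hnodup)

end LongPaths

section Menger

variable {V ι : Type*} {r : V → V → Prop} {A B C D S T : Finset V} {I : Finset ι}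
  {P : ι → List V}

theorem forall_mem_of_isChain_concat {p : V → Prop} {l : List V} {z : V}
    (h : (l ++ [z]).IsChain fun u v ↦ r u v ∧ p u) : ∀ u ∈ l, p u := by
  induction l with
  | nil => simp
  | cons a l ih => cases l <;> simp_all

theorem forall_mem_of_isChain_cons {p : V → Prop} {l : List V} {z : V}
    (h : (z :: l).IsChain fun u v ↦ r u v ∧ p v) : ∀ u ∈ l, p u := by
  induction l generalizing z with
  | nil => simp
  | cons a l ih =>
    obtain ⟨⟨-, ha⟩, hl⟩ := List.isChain_cons_cons.1 h
    exact List.forall_mem_cons.2 ⟨ha, ih hl⟩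

/-- A separation of `A` from `B` in the digraph with arc relation `r`: two sides `C ⊇ A` and
`D ⊇ B` covering all vertices such that no arc leads from `C \ D` to `D \ C`. Its order is the
size of `C ∩ D`. -/
structure IsSeparation (r : V → V → Prop) (A B C D : Finset V) : Prop where
  left_subset : A ⊆ C
  right_subset : B ⊆ D
  mem_or_mem : ∀ v, v ∈ C ∨ v ∈ D
  not_rel : ∀ u ∈ C, u ∉ D → ∀ v ∉ C, ¬ r u v

theorem IsSeparation.flip (h : IsSeparation r A B C D) : IsSeparation (flip r) B A D C where
  left_subset := h.right_subset
  right_subset := h.left_subset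
  mem_or_mem v := (h.mem_or_mem v).symm
  not_rel u _ huC v hvD := h.not_rel v ((h.mem_or_mem v).resolve_right hvD) hvD u huC

theorem IsSeparation.exists_mem_of_isChain (h : IsSeparation r A B C D) {l : List V}
    (hchain : l.IsChain r) {a b : V} (ha : a ∈ l.head?) (haA : a ∈ A) (hb : b ∈ l.getLast?)
    (hbB : b ∈ B) : ∃ z ∈ l, z ∈ C ∧ z ∈ D := by
  replace haA : a ∈ C := h.left_subset haA
  induction l generalizing a with
  | nil => simp at ha
  | cons c l ih =>
    obtain rfl : c = a := by simpa using ha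
    by_cases hcD : c ∈ D
    · exact ⟨c, by simp, haA, hcD⟩
    cases l with
    | nil => grind [h.right_subset hbB]
    | cons d l =>
      have hd : d ∈ C := by
        by_contra hd
        exact h.not_rel c haA hcD d hd hchain.rel
      obtain ⟨z, hz, hzCD⟩ := ih hchain.of_cons rfl (by simpa using hb) hd
      exact ⟨z, List.mem_cons_of_mem c hz, hzCD⟩

/-- A family `P` of pairwise disjoint paths from `A` to `B`, indexed by `I`, in the digraph with
arc relation `r`. -/
structure IsLinkage (r : V → V → Prop) (A B : Finset V) (I : Finset ι) (P : ι → List V) :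
    Prop where
  isChain : ∀ i ∈ I, (P i).IsChain r
  nodup : ∀ i ∈ I, (P i).Nodup
  head_mem : ∀ i ∈ I, ∃ a ∈ A, a ∈ (P i).head?
  getLast_mem : ∀ i ∈ I, ∃ b ∈ B, b ∈ (P i).getLast?
  disjoint : ∀ i ∈ I, ∀ j ∈ I, i ≠ j → (P i).Disjoint (P j)

theorem IsLinkage.mono {r' : V → V → Prop} (h : IsLinkage r A B I P) (hr : ∀ u v, r u v → r' u v) :
    IsLinkage r' A B I P :=
  { h with isChain := fun i hi ↦ (h.isChain i hi).imp hr }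

theorem IsLinkage.reverse (h : IsLinkage r A B I P) :
    IsLinkage (flip r) B A I fun i ↦ (P i).reverse where
  isChain i hi := List.isChain_reverse.2 (h.isChain i hi)
  nodup i hi := List.nodup_reverse.2 (h.nodup i hi)
  head_mem i hi := by simpa using h.getLast_mem i hi
  getLast_mem i hi := by simpa using h.head_mem i hi
  disjoint i hi j hj hij := by simpa using h.disjoint i hi j hj hij

theorem IsLinkage.exists_reindex_concat (h : IsLinkage r A B I P) (hcard : B.card ≤ I.card) :
    ∃ p : V → List V, IsLinkage r A B B fun b ↦ p b ++ [b] := by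
  choose e heB he using h.getLast_mem
  have hinj : ∀ i j (hi : i ∈ I) (hj : j ∈ I), e i hi = e j hj → i = j := by
    intro i j hi hj hij
    by_contra hne
    exact h.disjoint i hi j hj hne (List.mem_of_getLast? (he i hi))
      (hij ▸ List.mem_of_getLast? (he j hj))
  have hsurj : ∀ b ∈ B, ∃ l, ∃ i ∈ I, P i = l ++ [b] := by
    intro b hb
    obtain ⟨i, hi, rfl⟩ := Finset.surj_on_of_inj_on_of_card_le e heB hinj hcard b hb
    exact ⟨_, i, hi, (List.dropLast_append_getLast? _ (he i hi)).symm⟩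
  choose! p hp using hsurj
  refine ⟨p, fun b hb ↦ ?_, fun b hb ↦ ?_, fun b hb ↦ ?_, fun b hb ↦ ⟨b, hb, by simp⟩, ?_⟩
  · obtain ⟨i, hi, hPi⟩ := hp b hb
    exact hPi ▸ h.isChain i hi
  · obtain ⟨i, hi, hPi⟩ := hp b hb
    exact hPi ▸ h.nodup i hi
  · obtain ⟨i, hi, hPi⟩ := hp b hb
    exact hPi ▸ h.head_mem i hi
  · intro b hb c hc hbc
    obtain ⟨i, hi, hPi⟩ := hp b hb
    obtain ⟨j, hj, hPj⟩ := hp c hc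
    have hij : i ≠ j := by
      rintro rfl
      simp_all
    exact hPi ▸ hPj ▸ h.disjoint i hi j hj hij

theorem IsLinkage.exists_reindex_cons (h : IsLinkage r A B I P) (hcard : A.card ≤ I.card) :
    ∃ q : V → List V, IsLinkage r A B A fun a ↦ a :: q a := by
  obtain ⟨p, hp⟩ := h.reverse.exists_reindex_concat hcard
  exact ⟨fun a ↦ (p a).reverse, by simpa using hp.reverse⟩

theorem IsLinkage.append {p q : V → List V} (hp : IsLinkage r A T T fun z ↦ p z ++ [z])
    (hq : IsLinkage r T B T fun z ↦ z :: q z)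
    (hpq : ∀ z ∈ T, ∀ w ∈ T, (p z).Disjoint (w :: q w)) :
    IsLinkage r A B T fun z ↦ p z ++ z :: q z where
  isChain z hz := by
    simpa using (hp.isChain z hz).append_overlap (hq.isChain z hz) (by simp)
  nodup z hz := (hp.nodup z hz).of_append_left.append (hq.nodup z hz) (hpq z hz z hz)
  head_mem z hz := by simpa using hp.head_mem z hz
  getLast_mem z hz := by simpa using hq.getLast_mem z hz
  disjoint z hz w hw hzw := by
    have hp' := hp.disjoint z hz w hw hzw
    have hq' := hq.disjoint z hz w hw hzw
    have hqp' := (hpq w hw z hz).symm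
    simp_all [List.disjoint_append_left, List.disjoint_append_right]

variable [DecidableEq V]

theorem IsLinkage.cons_update {x y : V} {q : V → List V}
    (h : IsLinkage r (insert y S) B (insert y S) fun z ↦ z :: q z) (hxy : r x y) (hy : y ∉ S)
    (hx : ∀ z ∈ insert y S, x ∉ z :: q z) :
    IsLinkage r (insert x S) B (insert x S) fun z ↦ z :: Function.update q x (y :: q y) z := by
  obtain ⟨hchain, hnodup, -, hlast, hdisj⟩ := h
  have hne : ∀ z ∈ S, z ≠ x := fun z hz hzx ↦ hx z (by simp [hz]) (by simp [hzx])
  have hupdate : ∀ z ∈ S, Function.update q x (y :: q y) z = q z := fun z hz ↦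
    Function.update_of_ne (hne z hz) _ _
  simp only [Finset.forall_mem_insert, List.disjoint_left] at *
  refine ⟨?_, ?_, ?_, ?_, ?_⟩
  iterate 4 grind
  simp only [Finset.forall_mem_insert, List.disjoint_left, Function.update_self]
  grind

theorem IsLinkage.card_le_card_inter (h : IsLinkage r A B I P) {X : Finset V}
    (hX : ∀ i ∈ I, ∃ z ∈ P i, z ∈ X) :
    I.card ≤ (X ∩ I.biUnion fun i ↦ (P i).toFinset).card := by
  refine Finset.card_le_card_of_forall_subsingleton (fun i z ↦ z ∈ P i) (fun i hi ↦ ?_)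
    fun z _ i hi j hj ↦ ?_
  · obtain ⟨z, hzP, hzX⟩ := hX i hi
    exact ⟨z, by simpa [hzX] using ⟨i, hi, hzP⟩, hzP⟩
  · by_contra hne
    exact h.disjoint i hi.1 j hj.1 hne hi.2 hj.2

theorem IsSeparation.uncross {C' D' : Finset V} (h : IsSeparation r A B C D)
    (h' : IsSeparation (fun u v ↦ r u v ∧ u ∈ C \ D) A (C ∩ D) C' D') :
    IsSeparation r A B (C ∩ C') (D ∪ D') where
  left_subset := Finset.subset_inter h.left_subset h'.left_subset
  right_subset := h.right_subset.trans Finset.subset_union_left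
  mem_or_mem v := by grind [h.mem_or_mem v, h'.mem_or_mem v]
  not_rel u hu huD v hv huv := by grind [h.not_rel u, h'.not_rel u]

theorem IsSeparation.le_card_inter_left {k : ℕ} (h : IsSeparation r A B C D)
    (hk : ∀ C D, IsSeparation r A B C D → k ≤ (C ∩ D).card) {C' D' : Finset V}
    (h' : IsSeparation (fun u v ↦ r u v ∧ u ∈ C \ D) A (C ∩ D) C' D') : k ≤ (C' ∩ D').card :=
  (hk _ _ (h.uncross h')).trans <| Finset.card_le_card <| by
    grind [h'.right_subset]

theorem IsSeparation.le_card_inter_right {k : ℕ} (h : IsSeparation r A B C D)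
    (hk : ∀ C D, IsSeparation r A B C D → k ≤ (C ∩ D).card) {C' D' : Finset V}
    (h' : IsSeparation (fun u v ↦ r u v ∧ v ∈ D \ C) (C ∩ D) B C' D') : k ≤ (C' ∩ D').card := by
  rw [Finset.inter_comm] at h' ⊢
  refine h.flip.le_card_inter_left (fun E F hEF ↦ ?_) h'.flip
  rw [Finset.inter_comm]
  exact hk F E hEF.flip

theorem exists_isLinkage_of_forall_not_rel [Finite V] {k : ℕ} (hr : ∀ u v, ¬ r u v)
    (hk : ∀ C D, IsSeparation r A B C D → k ≤ (C ∩ D).card) :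
    ∃ (I : Finset V) (P : V → List V), I.card = k ∧ IsLinkage r A B I P := by
  cases nonempty_fintype V
  have hsep : IsSeparation r A B A (B ∪ Aᶜ) :=
    ⟨subset_rfl, Finset.subset_union_left, by grind [Finset.mem_compl], fun u _ _ v _ ↦ hr u v⟩
  obtain ⟨I, hI, rfl⟩ := Finset.exists_subset_card_eq (hk _ _ hsep)
  have hIAB : ∀ v ∈ I, v ∈ A ∧ v ∈ B := by grind [Finset.mem_compl]
  exact ⟨I, fun v ↦ [v], rfl, by simp, by simp, fun v hv ↦ ⟨v, (hIAB v hv).1, rfl⟩,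
    fun v hv ↦ ⟨v, (hIAB v hv).2, rfl⟩, fun u _ v _ huv ↦ by simpa using huv.symm⟩

theorem IsLinkage.glue_arc {x y : V} {p q : V → List V} (hxy : r x y)
    (hxC : x ∈ C) (hxD : x ∉ D) (hyC : y ∉ C) (hyD : y ∈ D)
    (hp : IsLinkage (fun u v ↦ r u v ∧ u ∈ C \ insert x D) A (insert x (C ∩ D))
      (insert x (C ∩ D)) fun z ↦ p z ++ [z])
    (hq : IsLinkage (fun u v ↦ r u v ∧ v ∈ D \ insert y C) (insert y (C ∩ D)) B
      (insert y (C ∩ D)) fun z ↦ z :: q z) :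
    IsLinkage r A B (insert x (C ∩ D)) fun z ↦ p z ++ z :: Function.update q x (y :: q y) z := by
  have hpC : ∀ z ∈ insert x (C ∩ D), ∀ u ∈ p z, u ∈ C \ insert x D := fun z hz ↦
    forall_mem_of_isChain_concat (hp.isChain z hz)
  have hqD : ∀ z ∈ insert y (C ∩ D), ∀ u ∈ q z, u ∈ D \ insert y C := fun z hz ↦
    forall_mem_of_isChain_cons (hq.isChain z hz)
  have hx : ∀ z ∈ insert y (C ∩ D), x ∉ z :: q z := by grind
  refine (hp.mono fun _ _ ↦ And.left).append
    ((hq.mono fun _ _ ↦ And.left).cons_update hxy (by simp [hyC]) hx) fun z hz w hw u hu hu' ↦ ?_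
  have huD : u ∈ insert x D := by grind
  exact (Finset.mem_sdiff.1 (hpC z hz u hu)).2 huD

theorem IsSeparation.insert_of_delete_arc {x y : V}
    (h : IsSeparation (fun u v ↦ r u v ∧ (u = x → v ≠ y)) A B C D) :
    IsSeparation r A B C (insert x D) ∧ IsSeparation r A B (insert y C) D := by
  obtain ⟨hA, hB, hCD, hnot⟩ := h
  exact ⟨⟨hA, by grind, by grind, by grind⟩, ⟨by grind, hB, by grind, by grind⟩⟩

theorem IsSeparation.endpoints_of_card_lt {k : ℕ} {x y : V}
    (h : IsSeparation (fun u v ↦ r u v ∧ (u = x → v ≠ y)) A B C D)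
    (hk : ∀ C D, IsSeparation r A B C D → k ≤ (C ∩ D).card) (hlt : (C ∩ D).card < k) :
    (x ∈ C ∧ x ∉ D ∧ (insert x (C ∩ D)).card = k) ∧
      y ∉ C ∧ y ∈ D ∧ (insert y (C ∩ D)).card = k := by
  have hxk := hk _ _ h.insert_of_delete_arc.1
  have hyk := hk _ _ h.insert_of_delete_arc.2
  have hx : x ∈ C ∧ x ∉ D := by grind
  have hy : y ∉ C ∧ y ∈ D := by grind
  grind

-- Menger's theorem, by deleting an arc `xy`. If this creates a separation `(C, D)` of order less
-- than `k`, then adding `x` to `D`, or `y` to `C`, makes it a separation of order exactly `k` of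
-- the original digraph, and the linkages on its two sides are joined by the arc `xy`.
theorem exists_isLinkage [Finite V] {k : ℕ}
    (hk : ∀ C D, IsSeparation r A B C D → k ≤ (C ∩ D).card) :
    ∃ (I : Finset V) (P : V → List V), I.card = k ∧ IsLinkage r A B I P := by
  induction hn : {e : V × V | r e.1 e.2}.ncard using Nat.strong_induction_on
    generalizing r A B with
  | _ n ih =>
  subst hn
  by_cases harc : ∃ x y, r x y
  swap
  · push Not at harc
    exact exists_isLinkage_of_forall_not_rel harc hk
  obtain ⟨x, y, hxy⟩ := harc
  have ih' : ∀ r' : V → V → Prop, (∀ u v, r' u v → r u v) → ¬ r' x y → ∀ A B,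
      (∀ C D, IsSeparation r' A B C D → k ≤ (C ∩ D).card) →
      ∃ (I : Finset V) (P : V → List V), I.card = k ∧ IsLinkage r' A B I P :=
    fun r' hr' hxy' A B hk' ↦ ih _ (Set.ncard_lt_ncard
      ⟨fun e he ↦ hr' e.1 e.2 he, fun hsub ↦ hxy' (@hsub (x, y) hxy)⟩) hk' rfl
  by_cases hdel : ∀ C D, IsSeparation (fun u v ↦ r u v ∧ (u = x → v ≠ y)) A B C D →
      k ≤ (C ∩ D).card
  · obtain ⟨I, P, hI, hP⟩ := ih' _ (fun _ _ ↦ And.left) (by simp) A B hdel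
    exact ⟨I, P, hI, hP.mono fun _ _ ↦ And.left⟩
  push Not at hdel
  obtain ⟨C, D, hCD, hlt⟩ := hdel
  obtain ⟨hx, hy⟩ := hCD.insert_of_delete_arc
  obtain ⟨⟨hxC, hxD, hcardx⟩, hyC, hyD, hcardy⟩ := hCD.endpoints_of_card_lt hk hlt
  obtain ⟨I, P, hI, hP⟩ := ih' _ (fun _ _ ↦ And.left) (by simp) A _
    fun _ _ ↦ hx.le_card_inter_left hk
  obtain ⟨J, Q, hJ, hQ⟩ := ih' _ (fun _ _ ↦ And.left) (by simp) _ B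
    fun _ _ ↦ hy.le_card_inter_right hk
  rw [Finset.inter_insert_of_mem hxC] at hP
  rw [Finset.insert_inter_of_mem hyD] at hQ
  obtain ⟨p, hp⟩ := hP.exists_reindex_concat (by lia)
  obtain ⟨q, hq⟩ := hQ.exists_reindex_cons (by lia)
  exact ⟨_, _, hcardx, .glue_arc hxy hxC hxD hyC hyD hp hq⟩

end Menger

section Layout

variable {V : Type*} {G : SimpleGraph V} {S A : Finset V} {pos : V → ℕ}
  {s t w : ℕ} {v : V}

/-- The vertices of `A` with a neighbour outside `A`, within the subgraph of `G` induced on `S`. -/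
noncomputable def innerBoundary (G : SimpleGraph V) (S A : Finset V) : Finset V :=
  open Classical in {v ∈ S | v ∈ A ∧ ∃ u ∈ S, u ∉ A ∧ G.Adj v u}

theorem mem_innerBoundary :
    v ∈ innerBoundary G S A ↔ v ∈ S ∧ v ∈ A ∧ ∃ u ∈ S, u ∉ A ∧ G.Adj v u := by
  simp [innerBoundary]

/-- The vertices of `S` placed before time `t` by the linear layout `pos` (an injective map; a
vertex placed at `pos v` is present from time `pos v + 1` on). -/
def before (S : Finset V) (pos : V → ℕ) (t : ℕ) : Finset V := {v ∈ S | pos v < t}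

theorem mem_before : v ∈ before S pos t ↔ v ∈ S ∧ pos v < t := by
  simp [before]

theorem before_mono (hst : s ≤ t) : before S pos s ⊆ before S pos t :=
  Finset.monotone_filter_right S fun _ _ h ↦ h.trans_le hst

/-- The adhesion of the layout `pos` at time `t`: the already placed vertices that still have a
neighbour to come. -/
noncomputable def adhesion (G : SimpleGraph V) (S : Finset V) (pos : V → ℕ) (t : ℕ) : Finset V :=
  innerBoundary G S (before S pos t)

theorem mem_adhesion :
    v ∈ adhesion G S pos t ↔ v ∈ S ∧ pos v < t ∧ ∃ u ∈ S, t ≤ pos u ∧ G.Adj v u := by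
  simp only [adhesion, mem_innerBoundary, mem_before]
  grind

/-- The largest position of a neighbour of `v` in `S`, and `0` if there is no such neighbour; after
this time `v` belongs to no adhesion. -/
noncomputable def lastNbr (G : SimpleGraph V) (S : Finset V) (pos : V → ℕ) (v : V) : ℕ :=
  open Classical in ({u ∈ S | G.Adj v u} : Finset V).sup pos

theorem mem_adhesion_iff_le_lastNbr :
    v ∈ adhesion G S pos t ↔ v ∈ S ∧ pos v < t ∧ t ≤ lastNbr G S pos v := by
  refine mem_adhesion.trans (and_congr_right fun _ ↦ and_congr_right fun hvt ↦ ?_)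
  rw [lastNbr, Finset.le_sup_iff (show (⊥ : ℕ) < t from Nat.zero_lt_of_lt hvt)]
  simp only [Finset.mem_filter]
  grind

/-- Every adhesion of the layout `pos` has at most `w` elements. Only the times at which a vertex
of `S` has just been placed are mentioned, as nothing changes in between. -/
def LayoutWidthLE (G : SimpleGraph V) (S : Finset V) (pos : V → ℕ) (w : ℕ) : Prop :=
  ∀ v ∈ S, (adhesion G S pos (pos v + 1)).card ≤ w

theorem LayoutWidthLE.card_adhesion_le (h : LayoutWidthLE G S pos w) (t : ℕ) :
    (adhesion G S pos t).card ≤ w := by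
  rcases (before S pos t).eq_empty_or_nonempty with hempty | hne
  · simp [adhesion, innerBoundary, hempty]
  · obtain ⟨v, hv, hmax⟩ := Finset.exists_max_image _ pos hne
    have hbefore : before S pos t = before S pos (pos v + 1) := by
      ext u
      grind [mem_before]
    rw [adhesion, hbefore]
    exact h v (mem_before.1 hv).1

/-- A layout is linked if no set squeezed between two of its prefixes has a smaller inner boundary
than all the prefixes between these two. -/
def IsLinkedLayout (G : SimpleGraph V) (S : Finset V) (pos : V → ℕ) : Prop :=
  ∀ s t, s ≤ t → ∀ A, before S pos s ⊆ A → A ⊆ before S pos t →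
    ∃ k, s ≤ k ∧ k ≤ t ∧ (adhesion G S pos k).card ≤ (innerBoundary G S A).card

variable [DecidableEq V]

theorem card_innerBoundary_inter_add_card_innerBoundary_union_le (G : SimpleGraph V)
    (S A B : Finset V) :
    (innerBoundary G S (A ∩ B)).card + (innerBoundary G S (A ∪ B)).card ≤
      (innerBoundary G S A).card + (innerBoundary G S B).card := by
  rw [← Finset.card_union_add_card_inter, ← Finset.card_union_add_card_inter (innerBoundary G S A)]
  refine add_le_add (Finset.card_le_card fun v ↦ ?_) (Finset.card_le_card fun v ↦ ?_)
  all_goals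
    simp only [Finset.mem_union, Finset.mem_inter, mem_innerBoundary]
    grind

/-- The layout that places the vertices of `A` first, and otherwise keeps the order of `pos`. -/
def moveFront (A : Finset V) (pos : V → ℕ) (v : V) : ℕ :=
  if v ∈ A then pos v else pos v + (A.sup pos + 1)

theorem moveFront_injective (hpos : Function.Injective pos) :
    Function.Injective (moveFront A pos) := by
  intro u v huv
  have hle : ∀ z ∈ A, pos z ≤ A.sup pos := fun z ↦ Finset.le_sup
  refine hpos ?_
  grind [moveFront]

theorem before_moveFront_of_mem (hv : v ∈ A) :
    before S (moveFront A pos) (moveFront A pos v + 1) = before S pos (pos v + 1) ∩ A := by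
  have hle : pos v ≤ A.sup pos := Finset.le_sup hv
  ext u
  grind [mem_before, moveFront]

theorem before_moveFront_of_notMem (hAS : A ⊆ S) (hv : v ∉ A) :
    before S (moveFront A pos) (moveFront A pos v + 1) = before S pos (pos v + 1) ∪ A := by
  have hle : ∀ z ∈ A, pos z ≤ A.sup pos := fun z ↦ Finset.le_sup
  ext u
  grind [mem_before, moveFront]

theorem card_adhesion_moveFront_le (hsA : before S pos s ⊆ A) (hAt : A ⊆ before S pos t)
    (hmin : ∀ B, before S pos s ⊆ B → B ⊆ before S pos t →
      (innerBoundary G S A).card ≤ (innerBoundary G S B).card) (hv : v ∈ S) :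
    (adhesion G S (moveFront A pos) (moveFront A pos v + 1)).card ≤
      (adhesion G S pos (pos v + 1)).card := by
  have hsubmod := card_innerBoundary_inter_add_card_innerBoundary_union_le G S
    (before S pos (pos v + 1)) A
  have hAS : A ⊆ S := hAt.trans (Finset.filter_subset _ _)
  by_cases hvA : v ∈ A
  · have hmin' := hmin (before S pos (pos v + 1) ∪ A) (hsA.trans Finset.subset_union_right)
      (Finset.union_subset (before_mono (mem_before.1 (hAt hvA)).2) hAt)
    rw [adhesion, before_moveFront_of_mem hvA, adhesion]
    lia
  · have hsv : s ≤ pos v := by grind [mem_before]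
    have hmin' := hmin (before S pos (pos v + 1) ∩ A)
      (Finset.subset_inter (before_mono (Nat.le_succ_of_le hsv)) hsA)
      (Finset.inter_subset_right.trans hAt)
    rw [adhesion, before_moveFront_of_notMem hAS hvA, adhesion]
    lia

theorem exists_card_adhesion_moveFront_lt (hst : s ≤ t) (hsA : before S pos s ⊆ A)
    (hAt : A ⊆ before S pos t)
    (hlt : ∀ k, s ≤ k → k ≤ t → (innerBoundary G S A).card < (adhesion G S pos k).card) :
    ∃ v ∈ S, (adhesion G S (moveFront A pos) (moveFront A pos v + 1)).card <
      (adhesion G S pos (pos v + 1)).card := by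
  obtain ⟨u, huA, hus⟩ : ∃ u ∈ A, u ∉ before S pos s := by
    by_contra! hAs
    exact (hlt s le_rfl hst).ne (by rw [adhesion, hsA.antisymm hAs])
  obtain ⟨v, hvA, hmax⟩ := Finset.exists_max_image A pos ⟨u, huA⟩
  have hA : before S pos (pos v + 1) ∩ A = A := by grind [mem_before]
  refine ⟨v, (mem_before.1 (hAt hvA)).1, ?_⟩
  rw [adhesion, before_moveFront_of_mem hvA, hA]
  exact hlt _ (by grind [mem_before]) (mem_before.1 (hAt hvA)).2

end Layout

section LinkedLayout

variable {V : Type*} {G : SimpleGraph V} {S : Finset V} {pos : V → ℕ} {s t w : ℕ}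

-- Among the sets refuting linkedness take one with smallest inner boundary: moving it to the
-- front does not increase any adhesion, by submodularity, and decreases one.
theorem LayoutWidthLE.exists_isLinkedLayout (hpos : Function.Injective pos)
    (hw : LayoutWidthLE G S pos w) :
    ∃ pos' : V → ℕ, Function.Injective pos' ∧ LayoutWidthLE G S pos' w ∧
      IsLinkedLayout G S pos' := by
  classical
  induction hn : ∑ v ∈ S, (adhesion G S pos (pos v + 1)).card using Nat.strong_induction_on
    generalizing pos with
  | _ n ih =>
  subst hn
  by_cases hlinked : IsLinkedLayout G S pos
  · exact ⟨pos, hpos, hw, hlinked⟩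
  simp only [IsLinkedLayout, not_forall, not_exists, not_and, not_le] at hlinked
  obtain ⟨s, t, hst, B, hsB, hBt, hB⟩ := hlinked
  obtain ⟨A, hA, hmin⟩ := Finset.exists_min_image
    {A ∈ (before S pos t).powerset | before S pos s ⊆ A} (fun A ↦ (innerBoundary G S A).card)
    ⟨B, by simp [hsB, hBt]⟩
  simp only [Finset.mem_filter, Finset.mem_powerset] at hA hmin
  have hle : ∀ v ∈ S, _ := fun v ↦ card_adhesion_moveFront_le hA.2 hA.1
    fun C hsC hCt ↦ hmin C ⟨hCt, hsC⟩
  have hlt := exists_card_adhesion_moveFront_lt hst hA.2 hA.1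
    fun k hsk hkt ↦ (hmin B ⟨hBt, hsB⟩).trans_lt (hB k hsk hkt)
  exact ih _ (Finset.sum_lt_sum hle hlt) (moveFront_injective hpos)
    (fun v hv ↦ (hle v hv).trans (hw v hv)) rfl

variable [DecidableEq V]

theorem IsSeparation.card_inter_ge_of_isLinkedLayout {C D : Finset V} {j : ℕ}
    (hlinked : IsLinkedLayout G S pos) (hst : s ≤ t)
    (hj : ∀ k, s ≤ k → k ≤ t → j ≤ (adhesion G S pos k).card)
    (h : IsSeparation (fun u v ↦ G.Adj u v ∧ v ∈ before S pos t) (adhesion G S pos s)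
      (adhesion G S pos t) C D) : j ≤ (C ∩ D).card := by
  obtain ⟨k, hsk, hkt, hk⟩ := hlinked s t hst (before S pos s ∪ (C ∩ before S pos t))
    Finset.subset_union_left (Finset.union_subset (before_mono hst) Finset.inter_subset_right)
  refine (hj k hsk hkt).trans (hk.trans (Finset.card_le_card fun v hv ↦ ?_))
  obtain ⟨hvS, hvA, u, huS, huA, hvu⟩ := mem_innerBoundary.1 hv
  simp only [Finset.mem_union, Finset.mem_inter, not_or, not_and] at hvA huA
  have hvC : v ∈ C := hvA.elim
    (fun hvs ↦ h.left_subset (mem_innerBoundary.2 ⟨hvS, hvs, u, huS, huA.1, hvu⟩)) And.left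
  have hvt : v ∈ before S pos t := hvA.elim (fun hvs ↦ before_mono hst hvs) And.right
  refine Finset.mem_inter.2 ⟨hvC, ?_⟩
  by_contra hvD
  have hut : u ∈ before S pos t := by
    by_contra hut
    exact hvD (h.right_subset (mem_innerBoundary.2 ⟨hvS, hvt, u, huS, hut, hvu⟩))
  exact h.not_rel v hvC hvD u (fun huC ↦ huA.2 huC hut) ⟨hvu, hut⟩

theorem isSeparation_before [Fintype V] {k : ℕ} (hsk : s ≤ k) (hkt : k ≤ t) :
    IsSeparation (fun u v ↦ G.Adj u v ∧ v ∈ before S pos t) (adhesion G S pos s)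
      (adhesion G S pos t) (before S pos k) ((before S pos k)ᶜ ∪ adhesion G S pos k) where
  left_subset v hv := by grind [mem_before, mem_adhesion]
  right_subset v hv := by grind [mem_before, mem_adhesion, Finset.mem_compl]
  mem_or_mem v := by grind [Finset.mem_compl]
  not_rel u hu huD v hv huv := by grind [mem_before, mem_adhesion]

theorem IsLinkedLayout.exists_card_le_and_le_card_inter [Finite V]
    (hlinked : IsLinkedLayout G S pos) {N j : ℕ} (hN : ¬ HasPathOn G N) (hst : s ≤ t)
    (hj : ∀ k, s ≤ k → k ≤ t → j ≤ (adhesion G S pos k).card) :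
    ∃ Q : Finset V, Q.card ≤ j * (N - 1) ∧
      ∀ k, s ≤ k → k ≤ t → j ≤ (adhesion G S pos k ∩ Q).card := by
  cases nonempty_fintype V
  obtain ⟨I, P, rfl, hP⟩ := exists_isLinkage fun C D h ↦
    IsSeparation.card_inter_ge_of_isLinkedLayout hlinked hst hj h
  refine ⟨I.biUnion fun i ↦ (P i).toFinset, ?_, fun k hsk hkt ↦ hP.card_le_card_inter ?_⟩
  · refine Finset.card_biUnion_le_card_mul _ _ _ fun i hi ↦ (List.toFinset_card_le _).trans ?_
    exact Nat.le_pred_of_lt (length_lt_of_not_hasPathOn hN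
      ((hP.isChain i hi).imp fun _ _ ↦ And.left) (hP.nodup i hi))
  · intro i hi
    obtain ⟨a, haA, ha⟩ := hP.head_mem i hi
    obtain ⟨b, hbB, hb⟩ := hP.getLast_mem i hi
    obtain ⟨z, hz, hzk, hzD⟩ :=
      (isSeparation_before hsk hkt).exists_mem_of_isChain (hP.isChain i hi) ha haA hb hbB
    exact ⟨z, hz, by grind [Finset.mem_compl]⟩

end LinkedLayout

section Regions

variable {V : Type*} [DecidableEq V] {G : SimpleGraph V} {S : Finset V} {pos : V → ℕ}
  {x y z s t w n q : ℕ} {v : V}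

/-- The vertices of `S` placed at the times in `[x, y)` whose neighbours are all placed before
time `y`; a part of the graph that is cut off from the rest by the adhesions at `x` and `y`. -/
noncomputable def region (G : SimpleGraph V) (S : Finset V) (pos : V → ℕ) (x y : ℕ) : Finset V :=
  {v ∈ S | x ≤ pos v ∧ pos v < y} \ adhesion G S pos y

theorem mem_region :
    v ∈ region G S pos x y ↔ (v ∈ S ∧ x ≤ pos v ∧ pos v < y) ∧ v ∉ adhesion G S pos y := by
  simp [region]

theorem region_zero_sup_add_one : region G S pos 0 (S.sup pos + 1) = S := by
  have hle : ∀ u ∈ S, pos u ≤ S.sup pos := fun u ↦ Finset.le_sup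
  ext v
  grind [mem_region, mem_adhesion]

theorem elimDepthLE_region_of_le_add_one (hpos : Function.Injective pos) (hxy : y ≤ x + 1) :
    ElimDepthLE G (region G S pos x y) 1 := by
  refine elimDepthLE_one_of_subsingleton fun u hu v hv ↦ hpos ?_
  have hu' := (mem_region.1 hu).1
  have hv' := (mem_region.1 hv).1
  lia

theorem ElimDepthLE.region_of_cut (hxz : ElimDepthLE G (region G S pos x z) n)
    (hzy : ElimDepthLE G (region G S pos z y) n) (hz : (adhesion G S pos z).card ≤ q) :
    ElimDepthLE G (region G S pos x y) (n + q) := by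
  have hdisj : Disjoint (region G S pos x z) (region G S pos z y) :=
    Finset.disjoint_left.2 fun v hv ↦ by grind [mem_region]
  have hadj : ∀ u ∈ region G S pos x z, ∀ v ∈ region G S pos z y, ¬ G.Adj u v := by
    grind [mem_region, mem_adhesion]
  refine (((hxz.union hdisj hadj hzy).union_left (adhesion G S pos z)).mono
    (Nat.add_le_add_left hz n)).subset fun v hv ↦ ?_
  grind [mem_region]

theorem elimDepthLE_region_of_window
    (hgap : ∀ x y, (∀ t, x < t → t < y → q < (adhesion G S pos t).card) →
      ElimDepthLE G (region G S pos x y) n)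
    (hwindow : ∀ s t, x < s → s ≤ t → t < y → (adhesion G S pos s).card ≤ q →
      (adhesion G S pos t).card ≤ q → ElimDepthLE G (region G S pos s t) n) :
    ElimDepthLE G (region G S pos x y) (n + 2 * q) := by
  by_cases! hlarge : ∀ t, x < t → t < y → q < (adhesion G S pos t).card
  · exact (hgap x y hlarge).mono (Nat.le_add_right _ _)
  have hne : {t ∈ Finset.Ioo x y | (adhesion G S pos t).card ≤ q}.Nonempty := by
    simpa [Finset.Nonempty, and_assoc] using hlarge
  obtain ⟨s, hs, hmin⟩ := Finset.exists_min_image _ id hne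
  obtain ⟨t, ht, hmax⟩ := Finset.exists_max_image _ id hne
  simp only [Finset.mem_filter, Finset.mem_Ioo, id] at hs hmin ht hmax
  have hxs : ElimDepthLE G (region G S pos x s) n := hgap x s fun k hxk hks ↦ by grind
  have hty : ElimDepthLE G (region G S pos t y) n := hgap t y fun k htk hky ↦ by grind
  have hst := hwindow s t hs.1.1 (hmin t ht) ht.1.2 hs.2 ht.2
  exact ((hxs.mono (Nat.le_add_right n q)).region_of_cut (hst.region_of_cut hty ht.2) hs.2).mono
    (by lia)

theorem elimDepthLE_region_of_binarySearch {F : ℕ → ℕ} (hF : Monotone F) (m : ℕ)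
    (hgap : ∀ x y, (∀ t, x < t → t < y → q < (adhesion G S pos t).card) →
      ElimDepthLE G (region G S pos x y) n)
    (hwindow : ∀ s t, x < s → s ≤ t → t < y → F s = F t → ElimDepthLE G (region G S pos s t) n)
    (hlt : ∀ s t, x < s → s ≤ t → t < y → (adhesion G S pos s).card ≤ q →
      (adhesion G S pos t).card ≤ q → F t < F s + 2 ^ m) :
    ElimDepthLE G (region G S pos x y) (n + (m + 2) * q) := by
  induction m generalizing x y with
  | zero =>
    simp only [zero_add]
    refine elimDepthLE_region_of_window hgap fun s t hxs hst hty hs ht ↦ ?_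
    have hFle : F t ≤ F s := Nat.le_of_lt_succ (hlt s t hxs hst hty hs ht)
    exact hwindow s t hxs hst hty ((hF hst).antisymm hFle)
  | succ m ih =>
    by_cases! hlarge : ∀ t, x < t → t < y → q < (adhesion G S pos t).card
    · exact (hgap x y hlarge).mono (Nat.le_add_right _ _)
    have hne : {t ∈ Finset.Ioo x y | (adhesion G S pos t).card ≤ q}.Nonempty := by
      simpa [Finset.Nonempty, and_assoc] using hlarge
    obtain ⟨s, hs, hmin⟩ := Finset.exists_min_image _ id hne
    -- Cutting at `z`, the last narrow time with `F z < F s + 2 ^ m`, halves the range of `F`.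
    obtain ⟨z, hz, hmax⟩ := Finset.exists_max_image
      {t ∈ Finset.Ioo x y | (adhesion G S pos t).card ≤ q ∧ F t < F s + 2 ^ m} id
      ⟨s, by simp_all⟩
    simp only [Finset.mem_filter, Finset.mem_Ioo, id] at hs hmin hz hmax
    have hxz := ih (x := x) (y := z) (fun s t hxs hst htz ↦ hwindow s t hxs hst (by lia))
      fun a b hxa hab hbz ha _ ↦ by
        have hsa := hF (hmin a ⟨⟨hxa, by lia⟩, ha⟩)
        have hbz' := hF hbz.le
        lia
    have hzy := ih (x := z) (y := y) (fun s t hzs ↦ hwindow s t (by lia))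
      fun a b hza hab hby ha hb ↦ by
        have hab' := hlt s b hs.1.1 (hmin b ⟨⟨by lia, hby⟩, hb⟩) hby hs.2 hb
        grind
    exact (hxz.region_of_cut hzy hz.2.1).mono (by lia)

theorem LayoutWidthLE.region_sub_card (hw : LayoutWidthLE G S pos w) (hst : s ≤ t) {Y : Finset V}
    (hY : ∀ k, s ≤ k → k ≤ t → Y ⊆ adhesion G S pos k) :
    LayoutWidthLE G (region G S pos s t) pos (w - Y.card) := by
  intro v hv
  obtain ⟨-, hsv, hvt⟩ := (mem_region.1 hv).1
  have hsub : adhesion G (region G S pos s t) pos (pos v + 1) ⊆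
      adhesion G S pos (pos v + 1) \ Y := by
    grind [mem_adhesion, mem_region, hY s le_rfl hst]
  calc (adhesion G (region G S pos s t) pos (pos v + 1)).card
    _ ≤ (adhesion G S pos (pos v + 1) \ Y).card := Finset.card_le_card hsub
    _ = (adhesion G S pos (pos v + 1)).card - Y.card :=
      Finset.card_sdiff_of_subset (hY _ (by lia) (by lia))
    _ ≤ w - Y.card := Nat.sub_le_sub_right (hw.card_adhesion_le _) _

theorem elimDepthLE_region_of_le_card_adhesion_inter {Q : Finset V} {h j : ℕ} (hQ : Q.card < 2 ^ h)
    (hj : ∀ t, x < t → t < y → j ≤ (adhesion G S pos t ∩ Q).card) (hw : LayoutWidthLE G S pos w)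
    (hnarrow : ∀ T, LayoutWidthLE G T pos (w - j) → ElimDepthLE G T n)
    (hgap : ∀ x y, (∀ t, x < t → t < y → q < (adhesion G S pos t).card) →
      ElimDepthLE G (region G S pos x y) n) :
    ElimDepthLE G (region G S pos x y) (n + (h + 2) * q) := by
  have hexpired : ∀ {s t}, s ≤ t → {v ∈ Q | lastNbr G S pos v < s} ⊆
      {v ∈ Q | lastNbr G S pos v < t} := fun hst ↦
    Finset.monotone_filter_right Q fun _ _ hv ↦ lt_of_lt_of_le hv hst
  refine elimDepthLE_region_of_binarySearch (F := fun t ↦ {v ∈ Q | lastNbr G S pos v < t}.card)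
    (fun s t hst ↦ Finset.card_le_card (hexpired hst)) h hgap ?_ fun s t _ _ _ _ _ ↦
      ((Finset.card_filter_le _ _).trans_lt hQ).trans_le (Nat.le_add_left _ _)
  -- No vertex of `Q` expires in the window, so those of the adhesion at `s` persist throughout.
  intro s t hxs hst hty hF
  have heq := Finset.eq_of_subset_of_card_le (hexpired hst) hF.ge
  have hpersist : ∀ k, s ≤ k → k ≤ t → adhesion G S pos s ∩ Q ⊆ adhesion G S pos k := by
    intro k hsk hkt v hv
    have hv' := Finset.ext_iff.1 heq v
    grind [mem_adhesion_iff_le_lastNbr]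
  refine hnarrow _ fun v hv ↦ (hw.region_sub_card hst hpersist v hv).trans ?_
  exact Nat.sub_le_sub_left (hj s hxs (by lia)) w

theorem elimDepthLE_region_of_adhesion_nonempty (hpos : Function.Injective pos) (hn : 0 < n)
    (hgap : ∀ x y, (∀ t, x < t → t < y → 0 < (adhesion G S pos t).card) →
      ElimDepthLE G (region G S pos x y) n) : ElimDepthLE G (region G S pos x y) n := by
  refine elimDepthLE_region_of_binarySearch (q := 0) monotone_id y hgap ?_ fun s t _ _ hty _ _ ↦ ?_
  · intro s t _ _ _ hst
    exact (elimDepthLE_region_of_le_add_one hpos (hst.ge.trans s.le_succ)).mono hn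
  · exact (hty.trans y.lt_two_pow_self).trans_le (Nat.le_add_left _ _)

theorem IsLinkedLayout.elimDepthLE_region [Finite V] (hlinked : IsLinkedLayout G S pos) {N h j : ℕ}
    (hN : ¬ HasPathOn G N) (hh : w * (N - 1) < 2 ^ h) (hpos : Function.Injective pos)
    (hw : LayoutWidthLE G S pos w)
    (hnarrow : ∀ k < w, ∀ T, LayoutWidthLE G T pos k →
      ElimDepthLE G T (2 * (h + 2) * (2 * k) + 1))
    (hj : ∀ t, x < t → t < y → j ≤ (adhesion G S pos t).card) :
    ElimDepthLE G (region G S pos x y) (2 * (h + 2) * (2 * w - j) + 1) := by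
  induction hd : w - j using Nat.strong_induction_on generalizing j x y with
  | _ d ih =>
  by_cases! hxy : y ≤ x + 1
  · exact (elimDepthLE_region_of_le_add_one hpos hxy).mono (Nat.le_add_left _ _)
  have hjw : j ≤ w := (hj (x + 1) (by lia) hxy).trans (hw.card_adhesion_le _)
  have hgap : ∀ x y, (∀ t, x < t → t < y → 2 * j < (adhesion G S pos t).card) →
      ElimDepthLE G (region G S pos x y) (2 * (h + 2) * (2 * w - 2 * j) + 1) := by
    intro x' y' hlarge
    by_cases! hxy' : y' ≤ x' + 1
    · exact (elimDepthLE_region_of_le_add_one hpos hxy').mono (Nat.le_add_left _ _)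
    have hlt := (hlarge (x' + 1) (by lia) hxy').trans_le (hw.card_adhesion_le _)
    exact (ih _ (by lia) hlarge rfl).mono (by gcongr; lia)
  rcases j.eq_zero_or_pos with rfl | hj0
  · exact elimDepthLE_region_of_adhesion_nonempty hpos (Nat.succ_pos _) hgap
  obtain ⟨Q, hQ, hQj⟩ := hlinked.exists_card_le_and_le_card_inter hN (s := x + 1) (t := y - 1)
    (by lia) fun k hk hk' ↦ hj k hk (by lia)
  have hQh : Q.card < 2 ^ h := (hQ.trans (Nat.mul_le_mul_right _ hjw)).trans_lt hh
  refine (elimDepthLE_region_of_le_card_adhesion_inter hQh (fun t hxt hty ↦ hQj t hxt (by lia)) hw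
    (fun T hT ↦ ?_) hgap).mono ?_
  · simpa only [Nat.mul_sub] using hnarrow (w - j) (by lia) T hT
  · obtain ⟨k, rfl⟩ := Nat.exists_eq_add_of_le hjw
    rw [show 2 * (j + k) - 2 * j = 2 * k by lia, show 2 * (j + k) - j = 2 * k + j by lia]
    exact le_of_eq (by ring)

theorem LayoutWidthLE.elimDepthLE [Finite V] {N h : ℕ} (hw : LayoutWidthLE G S pos w)
    (hN : ¬ HasPathOn G N) (hh : w * (N - 1) < 2 ^ h) (hpos : Function.Injective pos) :
    ElimDepthLE G S (2 * (h + 2) * (2 * w) + 1) := by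
  induction w using Nat.strong_induction_on generalizing S pos with
  | _ w ih =>
  obtain ⟨pos', hpos', hw', hlinked⟩ := hw.exists_isLinkedLayout hpos
  rw [← region_zero_sup_add_one (G := G) (S := S) (pos := pos')]
  refine hlinked.elimDepthLE_region (j := 0) hN hh hpos' hw' (fun k hk T hT ↦ ?_) (by simp)
  exact ih k hk hT ((Nat.mul_le_mul_right _ hk.le).trans_lt hh) hpos'

end Regions

section PathDecomposition

theorem exists_injective_refinement {V : Type*} [Finite V] (f : V → ℕ) :
    ∃ pos : V → ℕ, Function.Injective pos ∧ ∀ u v, pos u ≤ pos v → f u ≤ f v := by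
  cases nonempty_fintype V
  let index := Fintype.equivFin V
  refine ⟨fun v ↦ f v * Fintype.card V + index v, fun u v huv ↦ ?_, fun u v huv ↦ ?_⟩
  · have hmod := congrArg (· % Fintype.card V) huv
    simp only [Nat.mul_add_mod_self_right, Nat.mod_eq_of_lt (index _).isLt] at hmod
    exact index.injective (Fin.ext hmod)
  · have hpos : 0 < Fintype.card V := Fintype.card_pos_iff.2 ⟨u⟩
    have hdiv := Nat.div_le_div_right (c := Fintype.card V) huv
    simpa [Nat.mul_add_div, Nat.mul_comm _ (Fintype.card V), hpos,
      Nat.div_eq_of_lt (index _).isLt] using hdiv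

variable {V : Type*} {G : SimpleGraph V}

theorem PathDecomp.exists_layoutWidthLE [Fintype V] (D : PathDecomp G) {a : ℕ}
    (hD : ∀ t, (D.bag t).ncard ≤ a) :
    ∃ pos : V → ℕ, Function.Injective pos ∧ LayoutWidthLE G Finset.univ pos a := by
  have hfirst : ∀ v, ∃ s : Fin D.n, v ∈ D.bag s ∧ ∀ t, v ∈ D.bag t → s ≤ t := fun v ↦ by
    obtain ⟨s, hs, hmin⟩ := ({t | v ∈ D.bag t} : Set (Fin D.n)).toFinite.exists_minimal
      (D.mem_bag v)
    exact ⟨s, hs, fun t ht ↦ (le_total s t).elim id fun hts ↦ hmin ht hts⟩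
  choose first hmem hmin using hfirst
  obtain ⟨pos, hpos, hmono⟩ := exists_injective_refinement fun v ↦ (first v : ℕ)
  refine ⟨pos, hpos, fun v _ ↦ ?_⟩
  have hsub : (adhesion G Finset.univ pos (pos v + 1) : Set V) ⊆ D.bag (first v) := by
    intro z hz
    obtain ⟨-, hzv, u, -, hvu, hzu⟩ := mem_adhesion.1 hz
    obtain ⟨t, hzt, hut⟩ := D.edge_bag z u hzu
    have hvt : first v ≤ t := (hmono v u (by lia)).trans (hmin u t hut)
    exact D.convex z _ _ t (hmono z v (by lia)) hvt (hmem z) hzt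
  rw [← Set.ncard_coe_finset]
  exact (Set.ncard_le_ncard hsub (Set.toFinite _)).trans (hD _)

theorem exists_pathDecomp_ncard_le_of_pathwidth_lt {a : ℕ} (h : pathwidth G < a) :
    ∃ D : PathDecomp G, ∀ t, (D.bag t).ncard ≤ a := by
  let trivialDecomp : PathDecomp G :=
    { n := 1
      bag := fun _ ↦ Set.univ
      mem_bag := fun _ ↦ ⟨0, trivial⟩
      edge_bag := fun _ _ _ ↦ ⟨0, trivial, trivial⟩
      convex := fun _ _ _ _ _ _ _ _ ↦ trivial }
  obtain ⟨D, hD⟩ := Nat.sInf_mem (s := {w | ∃ D : PathDecomp G, D.width = w})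
    ⟨_, trivialDecomp, rfl⟩
  refine ⟨D, fun t ↦ ?_⟩
  have hle : (D.bag t).ncard ≤ ⨆ t, (D.bag t).ncard :=
    le_ciSup (f := fun t ↦ (D.bag t).ncard) (Set.finite_range _).bddAbove t
  have hlt : (⨆ t, (D.bag t).ncard) - 1 < a := hD.trans_lt h
  lia

end PathDecomposition

/-- Every finite simple graph of pathwidth strictly less than `a` that contains no
path on `2^b` vertices as a subgraph has treedepth at most `10 * a * b`. -/
theorem stmt_0 {V : Type*} [Fintype V] (G : SimpleGraph V) (a b : ℕ)
    (ha : 0 < a) (hb : 0 < b)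
    (hpw : pathwidth G < a) (hpath : ¬ HasPathOn G (2 ^ b)) :
    treedepth G ≤ 10 * a * b := by
  classical
  rcases le_or_gt (2 ^ b) (10 * a * b) with hsmall | hlarge
  · exact (elimDepthLE_of_not_hasPathOn hpath Finset.univ).treedepth_le.trans
      ((Nat.sub_le _ _).trans hsmall)
  have hab : 10 * b ≤ 10 * a * b := by nlinarith
  have hb5 : 5 ≤ b := by
    by_contra! hb5
    interval_cases b <;> lia
  have ha2 : a < 2 ^ b := by nlinarith
  have hpaths : a * (2 ^ b - 1) < 2 ^ (2 * b) := calc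
    a * (2 ^ b - 1) ≤ a * 2 ^ b := Nat.mul_le_mul_left _ (Nat.sub_le _ _)
    _ < 2 ^ b * 2 ^ b := Nat.mul_lt_mul_of_pos_right ha2 (by positivity)
    _ = 2 ^ (2 * b) := by ring
  obtain ⟨D, hD⟩ := exists_pathDecomp_ncard_le_of_pathwidth_lt hpw
  obtain ⟨pos, hpos, hw⟩ := D.exists_layoutWidthLE hD
  calc treedepth G
    _ ≤ 2 * (2 * b + 2) * (2 * a) + 1 := (hw.elimDepthLE hpath hpaths hpos).treedepth_le
    _ ≤ 10 * a * b := by nlinarith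
end

section
/- There exists a universal constant C such that every finite simple graph of treewidth strictly less than t containing no complete binary tree of height h as a minor has pathwidth at most C·t·h (for all positive integers t, h). -/
/-- A tree decomposition of `G`. -/
structure TreeDecomp {V : Type*} (G : SimpleGraph V) where
  n : ℕ
  T : SimpleGraph (Fin n)
  isTree : T.IsTree
  bag : Fin n → Set V
  edge_bag : ∀ u v : V, G.Adj u v → ∃ t, u ∈ bag t ∧ v ∈ bag t
  subtree : ∀ v : V, (SimpleGraph.induce {t | v ∈ bag t} T).Connected

/-- The width of a tree decomposition: maximum bag size minus 1. -/
noncomputable def TreeDecomp.width {V : Type*} {G : SimpleGraph V} (D : TreeDecomp G) : ℕ :=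
  (⨆ t, (D.bag t).ncard) - 1

/-- Treewidth: the minimum width of a tree decomposition. -/
noncomputable def treewidth {V : Type*} (G : SimpleGraph V) : ℕ :=
  sInf { w | ∃ D : TreeDecomp G, D.width = w }

/-- `H` is a minor of `G`: there is a family of pairwise disjoint connected
branch sets in `G`, one for each vertex of `H`, with edges of `H` realized by
edges of `G` between the corresponding branch sets. -/
def IsMinor {W V : Type*} (H : SimpleGraph W) (G : SimpleGraph V) : Prop :=
  ∃ f : W → Set V,
    (∀ w, (SimpleGraph.induce (f w) G).Connected) ∧
    (Pairwise fun w w' => Disjoint (f w) (f w')) ∧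
    (∀ w w', H.Adj w w' → ∃ u ∈ f w, ∃ v ∈ f w', G.Adj u v)

/-- The complete binary tree of height `h`: vertices are binary strings of
length `< h`, each vertex `l` of length `< h - 1` has two children `l ++ [b]`. -/
def completeBinaryTree (h : ℕ) : SimpleGraph {l : List Bool // l.length < h} :=
  SimpleGraph.fromRel (fun u v => ∃ b : Bool, (v : List Bool) = (u : List Bool) ++ [b])

/-!
Call a connected set `0`-rich, and call it `(k + 1)`-rich if from each of its vertices `r` there
is a fork: a connected set containing `r` with two disjoint adjacent `k`-rich sets. A `k`-rich set
contains a model of the complete binary tree of height `k + 1`, so it suffices to show that, in a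
graph of treewidth less than `t`, a set without `k`-rich subsets has a path decomposition with
bags of size at most `t * k`.

The proof is by induction on `k`. A connected set `D` that is not `(k + 1)`-rich has a root `r`
without a fork. Start from a bag `B` containing `r`. Among the `k`-rich components of `D - B`, take
the one, `C`, whose shadow (`C` and whatever it separates from `r`) is maximal. Every `k`-rich set
in `D - B` meets this shadow, since otherwise two components would form a fork at `r`. Hence the
vertices outside the shadow and `B` can be decomposed by induction, with `B` added to every bag, at
a cost of `t`. Then move on to a bag that contains the boundary of `C` and meets `C`, and continue
in the same way inside the shadow of `C`.
-/

section Connectivity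

variable {V : Type*} {G : SimpleGraph V} {S A C : Set V} {r u v : V}

theorem exists_adj_of_connected_induce (hS : (G.induce S).Connected) (hSA : (S ∩ A).Nonempty)
    (hsub : ¬ S ⊆ A) : ∃ a ∈ S ∩ A, ∃ b ∈ S \ A, G.Adj a b := by
  obtain ⟨a, haS, haA⟩ := hSA
  obtain ⟨b, hbS, hbA⟩ := Set.not_subset.1 hsub
  obtain ⟨p⟩ := hS.preconnected ⟨a, haS⟩ ⟨b, hbS⟩
  obtain ⟨d, -, hfst, hsnd⟩ := p.exists_boundary_dart (Subtype.val ⁻¹' A) haA hbA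
  exact ⟨d.fst, ⟨d.fst.2, hfst⟩, d.snd, ⟨d.snd.2, hsnd⟩, d.adj⟩

theorem subset_of_connected_induce (hS : (G.induce S).Connected) (hSA : (S ∩ A).Nonempty)
    (hclosed : ∀ a ∈ S ∩ A, ∀ b ∈ S, G.Adj a b → b ∈ A) : S ⊆ A := by
  by_contra hsub
  obtain ⟨a, ha, b, hb, hab⟩ := exists_adj_of_connected_induce hS hSA hsub
  exact hb.2 (hclosed a ha b hb.1 hab)

theorem exists_isPath_of_connected_induce (hS : (G.induce S).Connected) (hu : u ∈ S)
    (hv : v ∈ S) : ∃ p : G.Walk u v, p.IsPath ∧ ∀ x ∈ p.support, x ∈ S := by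
  obtain ⟨p, hp⟩ := hS.exists_isPath ⟨u, hu⟩ ⟨v, hv⟩
  let ι : G.induce S ↪g G := SimpleGraph.Embedding.induce S
  refine ⟨p.map ι.toHom, hp.map ι.injective, fun x hx => ?_⟩
  obtain ⟨y, -, rfl⟩ := List.mem_map.1 (SimpleGraph.Walk.support_map _ p ▸ hx)
  exact y.2

/-- The vertex set of the connected component of `r` in `G[S]`, as a subset of the ambient vertex
type. It is empty when `r ∉ S`. -/
def componentIn (G : SimpleGraph V) (S : Set V) (r : V) : Set V :=
  {v | ∃ p : G.Walk r v, ∀ x ∈ p.support, x ∈ S}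

theorem mem_componentIn_self (hr : r ∈ S) : r ∈ componentIn G S r :=
  ⟨.nil, by simpa using hr⟩

theorem componentIn_subset : componentIn G S r ⊆ S :=
  fun _ ⟨p, hp⟩ => hp _ p.end_mem_support

theorem mem_componentIn_of_adj (hu : u ∈ componentIn G S r) (hv : v ∈ S) (huv : G.Adj u v) :
    v ∈ componentIn G S r := by
  obtain ⟨p, hp⟩ := hu
  refine ⟨p.concat huv, fun x hx => ?_⟩
  rw [SimpleGraph.Walk.support_concat, List.mem_append, List.mem_singleton] at hx
  rcases hx with hx | rfl
  exacts [hp x hx, hv]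

theorem connected_induce_componentIn (hr : r ∈ S) :
    (G.induce (componentIn G S r)).Connected := by
  classical
  refine G.induce_connected_of_patches r (mem_componentIn_self hr) ?_
  rintro v ⟨p, hp⟩
  refine ⟨{x | x ∈ p.support}, fun x hx => ⟨p.takeUntil x hx, fun y hy => ?_⟩,
    p.start_mem_support, p.end_mem_support, p.connected_induce_support.preconnected _ _⟩
  exact hp y (p.support_takeUntil_subset_support hx hy)

theorem subset_componentIn (hC : (G.induce C).Connected) (hCS : C ⊆ S)
    (hmeet : (C ∩ componentIn G S r).Nonempty) : C ⊆ componentIn G S r :=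
  subset_of_connected_induce hC hmeet fun _ ha _ hb hab =>
    mem_componentIn_of_adj ha.2 (hCS hb) hab

end Connectivity

section Forks

variable {V : Type*} {G : SimpleGraph V} {P : Set V → Prop} {S S' : Set V} {r : V} {k : ℕ}

/-- A fork at `r`: a connected set `X ∋ r` together with two disjoint sets satisfying `P`, both
disjoint from `X` and adjacent to `X`. It is the top level of a binary tree model; indexing by
`Bool` matches the two children of a vertex of `completeBinaryTree`. -/
structure IsFork (G : SimpleGraph V) (P : Set V → Prop) (r : V) (X : Set V)
    (B : Bool → Set V) : Prop where
  root_mem : r ∈ X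
  connected : (G.induce X).Connected
  disjoint_root : ∀ b, Disjoint X (B b)
  disjoint_branches : Pairwise (Function.onFun Disjoint B)
  branch : ∀ b, P (B b)
  adj : ∀ b, ∃ x ∈ X, ∃ y ∈ B b, G.Adj x y

/-- `S` contains a fork at `r`. -/
def HasFork (G : SimpleGraph V) (P : Set V → Prop) (S : Set V) (r : V) : Prop :=
  ∃ X B, IsFork G P r X B ∧ X ⊆ S ∧ ∀ b, B b ⊆ S

/-- Connected sets that contain a fork at each of their vertices. -/
def IsForking (G : SimpleGraph V) (P : Set V → Prop) (S : Set V) : Prop :=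
  (G.induce S).Connected ∧ ∀ r ∈ S, HasFork G P S r

/-- `k`-fold forking connected sets. A `k`-rich set contains, for each of its vertices `r`, a model
of the complete binary tree of height `k + 1` whose root branch set contains `r`. -/
def IsRich (G : SimpleGraph V) : ℕ → Set V → Prop
  | 0 => fun S => (G.induce S).Connected
  | k + 1 => IsForking G (IsRich G k)

theorem HasFork.mono (h : HasFork G P S r) (hS : S ⊆ S') : HasFork G P S' r := by
  obtain ⟨X, B, hfork, hX, hB⟩ := h
  exact ⟨X, B, hfork, hX.trans hS, fun b => (hB b).trans hS⟩

theorem IsForking.mono (h : IsForking G P S) (hS : S ⊆ S') (hS' : (G.induce S').Connected) :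
    IsForking G P S' := by
  refine ⟨hS', fun r hr => ?_⟩
  by_cases hrS : r ∈ S
  · exact (h.2 r hrS).mono hS
  -- The component of `r` outside `S` is attached to the root of a fork of `S`.
  set R := componentIn G (S' \ S) r
  have hrR : r ∈ R := mem_componentIn_self ⟨hr, hrS⟩
  have hR : (G.induce R).Connected := connected_induce_componentIn ⟨hr, hrS⟩
  have hRS : R ⊆ S' \ S := componentIn_subset
  have hSR : Disjoint R S := Set.disjoint_left.2 fun v hv => (hRS hv).2
  obtain ⟨⟨s, hs⟩⟩ := h.1.nonempty
  obtain ⟨a, ha, b, hb, hab⟩ := exists_adj_of_connected_induce (A := R) hS' ⟨r, hr, hrR⟩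
    fun hsub => Set.disjoint_left.1 hSR (hsub (hS hs)) hs
  have hbS : b ∈ S := by
    by_contra hbS
    exact hb.2 (mem_componentIn_of_adj ha.2 ⟨hb.1, hbS⟩ hab)
  obtain ⟨X, B, hfork, hX, hB⟩ := h.2 b hbS
  refine ⟨R ∪ X, B, ⟨Or.inl hrR, ?_, fun i => ?_, hfork.disjoint_branches, hfork.branch,
    fun i => ?_⟩, Set.union_subset (hRS.trans Set.sdiff_subset) (hX.trans hS),
    fun i => (hB i).trans hS⟩
  · exact G.connected_induce_union hR.preconnected hfork.connected.preconnected ha.2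
      hfork.root_mem hab
  · exact Set.disjoint_union_left.2 ⟨hSR.mono_right (hB i), hfork.disjoint_root i⟩
  · obtain ⟨x, hx, y, hy, hxy⟩ := hfork.adj i
    exact ⟨x, Or.inr hx, y, hy, hxy⟩

theorem IsRich.connected : ∀ {k : ℕ}, IsRich G k S → (G.induce S).Connected
  | 0, h => h
  | _ + 1, h => h.1

theorem IsRich.mono :
    ∀ {k : ℕ}, IsRich G k S → S ⊆ S' → (G.induce S').Connected → IsRich G k S'
  | 0, _, _, hS' => hS'
  | _ + 1, h, hS, hS' => IsForking.mono h hS hS'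

end Forks

section BinaryTreeModels

variable {V : Type*} {G : SimpleGraph V} {S : Set V} {r : V} {k : ℕ}

/-- A model in `G[S]` of the complete binary tree of height `k + 1` whose root branch set contains
`r`. Branch sets are indexed by all binary strings; the ones of length greater than `k` are
irrelevant and may be empty. -/
structure IsBinaryTreeModel (G : SimpleGraph V) (k : ℕ) (S : Set V) (r : V)
    (f : List Bool → Set V) : Prop where
  root_mem : r ∈ f []
  subset : ∀ l, f l ⊆ S
  disjoint : Pairwise (Function.onFun Disjoint f)
  connected : ∀ l, l.length ≤ k → (G.induce (f l)).Connected
  adj : ∀ l b, l.length < k → ∃ u ∈ f l, ∃ v ∈ f (l ++ [b]), G.Adj u v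

/-- The family of branch sets with root `X` and subtrees `f false` and `f true`. -/
def graft (X : Set V) (f : Bool → List Bool → Set V) : List Bool → Set V
  | [] => X
  | b :: l => f b l

theorem isBinaryTreeModel_zero (hS : (G.induce S).Connected) (hr : r ∈ S) :
    IsBinaryTreeModel G 0 S r (graft S fun _ _ => ∅) where
  root_mem := hr
  subset
    | [] => subset_rfl
    | _ :: _ => Set.empty_subset S
  disjoint
    | [], [], hne => absurd rfl hne
    | [], _ :: _, _ => Set.disjoint_empty S
    | _ :: _, _, _ => Set.empty_disjoint _
  connected
    | [], _ => hS
  adj _ _ hl := absurd hl (Nat.not_lt_zero _)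

theorem IsFork.isBinaryTreeModel_graft {P : Set V → Prop} {X : Set V} {B : Bool → Set V}
    {f : Bool → List Bool → Set V} {s : Bool → V} (hfork : IsFork G P r X B) (hX : X ⊆ S)
    (hB : ∀ b, B b ⊆ S) (hs : ∀ b, ∃ x ∈ X, G.Adj x (s b))
    (hf : ∀ b, IsBinaryTreeModel G k (B b) (s b) (f b)) :
    IsBinaryTreeModel G (k + 1) S r (graft X f) where
  root_mem := hfork.root_mem
  subset
    | [] => hX
    | b :: l => ((hf b).subset l).trans (hB b)
  disjoint
    | [], [], hne => absurd rfl hne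
    | [], b :: l, _ => (hfork.disjoint_root b).mono_right ((hf b).subset l)
    | b :: l, [], _ => ((hfork.disjoint_root b).mono_right ((hf b).subset l)).symm
    | b :: l, b' :: l', hne => by
      obtain rfl | hb := eq_or_ne b b'
      · exact (hf b).disjoint (by simpa using hne)
      · exact (hfork.disjoint_branches hb).mono ((hf b).subset l) ((hf b').subset l')
  connected
    | [], _ => hfork.connected
    | b :: l, hl => (hf b).connected l (Nat.le_of_succ_le_succ hl)
  adj
    | [], b, _ => by
      obtain ⟨x, hx, hxs⟩ := hs b
      exact ⟨x, hx, s b, (hf b).root_mem, hxs⟩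
    | b :: l, b', hl => (hf b).adj l b' (Nat.lt_of_succ_lt_succ hl)

theorem IsRich.exists_isBinaryTreeModel :
    ∀ {k : ℕ} {S : Set V} {r : V}, IsRich G k S → r ∈ S → ∃ f, IsBinaryTreeModel G k S r f
  | 0, _, _, hS, hr => ⟨_, isBinaryTreeModel_zero hS hr⟩
  | k + 1, S, r, hS, hr => by
    obtain ⟨X, B, hfork, hX, hB⟩ := hS.2 r hr
    choose x hx s hsB hxs using hfork.adj
    choose f hf using fun b => (hfork.branch b).exists_isBinaryTreeModel (hsB b)
    exact ⟨graft X f, hfork.isBinaryTreeModel_graft hX hB (fun b => ⟨x b, hx b, hxs b⟩) hf⟩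

theorem IsBinaryTreeModel.isMinor {f : List Bool → Set V} (hf : IsBinaryTreeModel G k S r f) :
    IsMinor (completeBinaryTree (k + 1)) G := by
  have adj_child : ∀ w w' : {l : List Bool // l.length < k + 1}, (∃ b, w'.1 = w.1 ++ [b]) →
      ∃ u ∈ f w.1, ∃ v ∈ f w'.1, G.Adj u v := by
    rintro w ⟨_, hw'⟩ ⟨b, rfl⟩
    exact hf.adj w.1 b (by simpa using hw')
  refine ⟨fun w => f w.1, fun w => hf.connected w.1 (Nat.le_of_lt_succ w.2),
    fun w w' hne => hf.disjoint (Subtype.coe_ne_coe.2 hne), fun w w' hadj => ?_⟩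
  rw [completeBinaryTree, SimpleGraph.fromRel_adj] at hadj
  rcases hadj.2 with hchild | hchild
  · exact adj_child w w' hchild
  · obtain ⟨u, hu, v, hv, huv⟩ := adj_child w' w hchild
    exact ⟨v, hv, u, hu, huv.symm⟩

theorem IsRich.isMinor_completeBinaryTree (hS : IsRich G k S) :
    IsMinor (completeBinaryTree (k + 1)) G := by
  obtain ⟨⟨r, hr⟩⟩ := hS.connected.nonempty
  obtain ⟨f, hf⟩ := hS.exists_isBinaryTreeModel hr
  exact hf.isMinor

end BinaryTreeModels

section Sweeps

variable {V : Type*} {G : SimpleGraph V} {w w' : ℕ} {A A₁ D S S₁ Y Z : Set V}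

/-- `Sweep G w A S` says that `G[A ∪ S]` has a path decomposition with bags of size at most `w`
and first bag `S`, given bag by bag: `A` is the set of vertices still to be introduced, and moving
to the next bag `S'` forgets `S \ S'` and introduces the vertices of `S'` in `A`. -/
inductive Sweep (G : SimpleGraph V) (w : ℕ) : Set V → Set V → Prop
  | nil {S : Set V} : S.ncard ≤ w → Sweep G w ∅ S
  | cons {A S S' : Set V} : S.ncard ≤ w → S' ⊆ A ∪ S → (∀ s ∈ S \ S', ∀ a ∈ A, ¬ G.Adj s a) →
      Sweep G w (A \ S') S' → Sweep G w A S

/-- The sets `f 0, …, f n` are the bags of a path decomposition of `G[U]` with bags of size at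
most `w` and first bag `S`. -/
structure IsBagSequence (G : SimpleGraph V) (w : ℕ) (U S : Set V) (n : ℕ) (f : ℕ → Set V) :
    Prop where
  zero : f 0 = S
  ncard_le : ∀ i, (f i).ncard ≤ w
  subset : ∀ i, f i ⊆ U
  exists_mem : ∀ v ∈ U, ∃ i ≤ n, v ∈ f i
  exists_mem_mem : ∀ u ∈ U, ∀ v ∈ U, G.Adj u v → ∃ i ≤ n, u ∈ f i ∧ v ∈ f i
  ordConnected : ∀ v, {i | v ∈ f i}.OrdConnected

/-- The sequence `S, f 0, f 1, …`. -/
def consBag (S : Set V) (f : ℕ → Set V) : ℕ → Set V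
  | 0 => S
  | i + 1 => f i

theorem isBagSequence_const (hS : S.ncard ≤ w) : IsBagSequence G w S S 0 fun _ => S where
  zero := rfl
  ncard_le _ := hS
  subset _ := subset_rfl
  exists_mem _ hv := ⟨0, le_rfl, hv⟩
  exists_mem_mem _ hu _ hv _ := ⟨0, le_rfl, hu, hv⟩
  ordConnected _ := ⟨fun _ h _ _ _ _ => h⟩

theorem IsBagSequence.cons {S' : Set V} {n : ℕ} {f : ℕ → Set V}
    (hf : IsBagSequence G w (A ∪ S') S' n f) (hAS : Disjoint A S) (hS : S.ncard ≤ w)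
    (hS' : S' ⊆ A ∪ S) (hforget : ∀ s ∈ S \ S', ∀ a ∈ A, ¬ G.Adj s a) :
    IsBagSequence G w (A ∪ S) S (n + 1) (consBag S f) where
  zero := rfl
  ncard_le
    | 0 => hS
    | i + 1 => hf.ncard_le i
  subset
    | 0 => Set.subset_union_right
    | i + 1 => (hf.subset i).trans (Set.union_subset Set.subset_union_left hS')
  exists_mem := by
    rintro v (hvA | hvS)
    · obtain ⟨i, hi, hvi⟩ := hf.exists_mem v (Or.inl hvA)
      exact ⟨i + 1, Nat.succ_le_succ hi, hvi⟩
    · exact ⟨0, Nat.zero_le _, hvS⟩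
  exists_mem_mem := by
    have neighbor_mem : ∀ a ∈ A, ∀ s ∈ S, G.Adj s a → s ∈ S' := fun a ha s hs hsa =>
      by_contra fun hs' => hforget s ⟨hs, hs'⟩ a ha hsa
    have later : ∀ u ∈ A ∪ S', ∀ v ∈ A ∪ S', G.Adj u v →
        ∃ i ≤ n + 1, u ∈ consBag S f i ∧ v ∈ consBag S f i := fun u hu v hv huv => by
      obtain ⟨i, hi, hmem⟩ := hf.exists_mem_mem u hu v hv huv
      exact ⟨i + 1, Nat.succ_le_succ hi, hmem⟩
    rintro u (hu | hu) v (hv | hv) huv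
    · exact later u (Or.inl hu) v (Or.inl hv) huv
    · exact later u (Or.inl hu) v (Or.inr (neighbor_mem u hu v hv huv.symm)) huv
    · exact later u (Or.inr (neighbor_mem v hv u hu huv)) v (Or.inl hv) huv
    · exact ⟨0, Nat.zero_le _, hu, hv⟩
  ordConnected v := by
    have mem_next : ∀ t, v ∈ S → v ∈ f t → v ∈ f 0 := fun t hvS hvt =>
      hf.zero ▸ (hf.subset t hvt).resolve_left fun hvA => Set.disjoint_left.1 hAS hvA hvS
    refine ⟨?_⟩
    rintro (_ | s) hs (_ | t) ht (_ | u) ⟨hsu, hut⟩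
    · exact hs
    · omega
    · exact hs
    · exact (hf.ordConnected v).out (mem_next t hs ht) ht ⟨Nat.zero_le u, by omega⟩
    · exact ht
    · omega
    · omega
    · exact (hf.ordConnected v).out hs ht ⟨by omega, by omega⟩

theorem Sweep.exists_isBagSequence (h : Sweep G w A S) (hAS : Disjoint A S) :
    ∃ n f, IsBagSequence G w (A ∪ S) S n f := by
  induction h with
  | nil hS =>
    rw [Set.empty_union]
    exact ⟨0, _, isBagSequence_const hS⟩
  | cons hS hS' hforget _ ih =>
    obtain ⟨n, f, hf⟩ := ih Set.disjoint_sdiff_left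
    rw [Set.sdiff_union_self] at hf
    exact ⟨n + 1, _, hf.cons hAS hS hS' hforget⟩

theorem IsBagSequence.pathwidth_le {n : ℕ} {f : ℕ → Set V}
    (hf : IsBagSequence G w Set.univ S n f) : pathwidth G ≤ w - 1 := by
  let D : PathDecomp G :=
    { n := n + 1
      bag := fun i => f i
      mem_bag := fun v => by
        obtain ⟨i, hi, hv⟩ := hf.exists_mem v trivial
        exact ⟨⟨i, Nat.lt_succ_of_le hi⟩, hv⟩
      edge_bag := fun u v huv => by
        obtain ⟨i, hi, hmem⟩ := hf.exists_mem_mem u trivial v trivial huv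
        exact ⟨⟨i, Nat.lt_succ_of_le hi⟩, hmem⟩
      convex := fun v _ _ _ hsu hut hs ht => (hf.ordConnected v).out hs ht ⟨hsu, hut⟩ }
  have : Nonempty (Fin D.n) := ⟨⟨0, Nat.succ_pos n⟩⟩
  have hsup : ⨆ i, (D.bag i).ncard ≤ w := ciSup_le fun i => hf.ncard_le i
  calc pathwidth G ≤ D.width := Nat.sInf_le ⟨D, rfl⟩
    _ ≤ w - 1 := Nat.sub_le_sub_right hsup 1

theorem Sweep.pathwidth_le (h : Sweep G w Set.univ ∅) : pathwidth G ≤ w - 1 := by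
  obtain ⟨n, f, hf⟩ := h.exists_isBagSequence (Set.disjoint_empty _)
  rw [Set.union_empty] at hf
  exact hf.pathwidth_le

/-- The vertices of `D` outside `A` with a neighbor in `A`. -/
def boundaryIn (G : SimpleGraph V) (D A : Set V) : Set V :=
  {v ∈ D \ A | ∃ a ∈ A, G.Adj v a}

theorem disjoint_boundaryIn : Disjoint A (boundaryIn G D A) :=
  Set.disjoint_right.2 fun _ hv => hv.1.2

-- `Z` is added to every bag of the sweep of `Y`, after which everything outside `S₁` is forgotten
-- and the sweep of `A` takes over.
theorem Sweep.append (hA : Sweep G w' A S₁) (hY : Sweep G w Y S) (hw : w + Z.ncard ≤ w')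
    (hS₁ : S₁ ⊆ Z) (hAZ : Disjoint A Z) (hYA : Disjoint Y A) (hYZ : Disjoint Y Z)
    (hSA : Disjoint S A) (hsep : ∀ y ∈ Y ∪ S ∪ Z, ∀ a ∈ A, G.Adj y a → y ∈ S₁) :
    Sweep G w' (Y ∪ A) (S ∪ Z) := by
  have hcard : ∀ {S : Set V}, S.ncard ≤ w → (S ∪ Z).ncard ≤ w' := fun {S} hS =>
    (Set.ncard_union_le S Z).trans ((Nat.add_le_add_right hS _).trans hw)
  induction hY with
  | @nil S hS =>
    rw [Set.empty_union]
    refine .cons (hcard hS) (hS₁.trans (Set.subset_union_right.trans Set.subset_union_right))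
      (fun s hs a ha hsa => hs.2 (hsep s ?_ a ha hsa)) ?_
    · exact hs.1.imp Or.inr id
    · rwa [(hAZ.mono_right hS₁).sdiff_eq_left]
  | @cons Y S S' hS hS' hforget _ ih =>
    have hS'A : Disjoint S' A := (Set.disjoint_union_left.2 ⟨hYA, hSA⟩).mono_left hS'
    have hrest : (Y ∪ A) \ (S' ∪ Z) = Y \ S' ∪ A := by
      rw [Set.union_sdiff_distrib, ← Set.sdiff_sdiff,
        (hYZ.mono_left Set.sdiff_subset).sdiff_eq_left,
        (Set.disjoint_union_right.2 ⟨hS'A.symm, hAZ⟩).sdiff_eq_left]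
    refine .cons (S' := S' ∪ Z) (hcard hS) ?_ ?_ ?_
    · grind
    · rintro s ⟨hs | hs, hs'⟩ a (ha | ha) hsa
      · exact hforget s ⟨hs, fun h => hs' (Or.inl h)⟩ a ha hsa
      · exact hs' (Or.inr (hS₁ (hsep s (Or.inl (Or.inr hs)) a ha hsa)))
      · exact hs' (Or.inr hs)
      · exact hs' (Or.inr hs)
    · rw [hrest]
      refine ih (hYA.mono_left Set.sdiff_subset) (hYZ.mono_left Set.sdiff_subset) hS'A ?_
      intro y hy
      refine hsep y ?_
      grind

variable [Finite V]

theorem Sweep.of_forall_connected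
    (h : ∀ K ⊆ Y, (G.induce K).Connected → Sweep G w K ∅) : Sweep G w Y ∅ := by
  induction Y using WellFoundedLT.induction with
  | ind Y ih =>
    obtain rfl | ⟨v, hv⟩ := Y.eq_empty_or_nonempty
    · exact .nil (by simp)
    set K := componentIn G Y v
    have hKY : K ⊆ Y := componentIn_subset
    have hlt : Y \ K ⊂ Y := 
      ⟨Set.sdiff_subset, fun h => (h hv).2 (mem_componentIn_self hv)⟩
    have hrest : Sweep G w (Y \ K) ∅ := ih _ hlt fun K' hK' => h K' (hK'.trans Set.sdiff_subset)
    have happend := hrest.append (h K hKY (connected_induce_componentIn hv)) (Z := ∅) (by simp)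
      subset_rfl (Set.disjoint_empty _) Set.disjoint_sdiff_right (Set.disjoint_empty _)
      (Set.empty_disjoint _) fun y hy a ha hya =>
        absurd (mem_componentIn_of_adj (by simpa using hy) ha.1 hya) ha.2
    rwa [Set.union_sdiff_cancel hKY, Set.union_empty] at happend

theorem Sweep.boundaryIn_of_subset (h₁ : Sweep G w' A₁ (boundaryIn G D A₁))
    (hY : Sweep G w ((A \ A₁) \ Z) ∅) (hw : w + Z.ncard ≤ w') (hAD : A ⊆ D) (hA₁ : A₁ ⊆ A)
    (hAZ : boundaryIn G D A ⊆ Z) (hA₁Z : boundaryIn G D A₁ ⊆ Z) :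
    Sweep G w' A (boundaryIn G D A) := by
  set S := boundaryIn G D A
  set S₁ := boundaryIn G D A₁
  have hSA : Disjoint A S := disjoint_boundaryIn
  set Z' := (Z ∩ (A ∪ S)) \ A₁
  have hZ'Z : Z' ⊆ Z := Set.sdiff_subset.trans Set.inter_subset_left
  have hS₁Z' : S₁ ⊆ Z' := by
    rintro v ⟨⟨hvD, hvA₁⟩, a, ha, hva⟩
    refine ⟨⟨hA₁Z ⟨⟨hvD, hvA₁⟩, a, ha, hva⟩, ?_⟩, hvA₁⟩
    exact or_iff_not_imp_left.2 fun hvA => ⟨⟨hvD, hvA⟩, a, hA₁ ha, hva⟩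
  have happend : Sweep G w' ((A \ A₁) \ Z ∪ A₁) (∅ ∪ Z') := by
    have hw' : w + Z'.ncard ≤ w' := (Nat.add_le_add_left (Set.ncard_le_ncard hZ'Z) w).trans hw
    refine h₁.append hY hw' hS₁Z' Set.disjoint_sdiff_right
      (Set.disjoint_sdiff_left.mono_left Set.sdiff_subset)
      (Set.disjoint_sdiff_left.mono_right hZ'Z) (Set.empty_disjoint _) ?_
    rintro y hy a ha hya
    have hyD : y ∈ D := by grind [boundaryIn]
    have hyA₁ : y ∉ A₁ := by grind
    exact ⟨⟨hyD, hyA₁⟩, a, ha, hya⟩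
  have hrest : (A \ A₁) \ Z ∪ A₁ = A \ Z' := by
    grind
  have hScard : S.ncard ≤ w' :=
    (Set.ncard_le_ncard hAZ).trans ((Nat.le_add_left _ _).trans hw)
  rw [Set.empty_union, hrest] at happend
  refine .cons hScard ?_ ?_ happend
  · exact Set.sdiff_subset.trans Set.inter_subset_right
  · grind

end Sweeps

section TreeDecompositions

variable {V : Type*} {G : SimpleGraph V} {t : ℕ}

theorem isPath_append {u v w : V} {p : G.Walk u v} {q : G.Walk v w} (hp : p.IsPath)
    (hq : q.IsPath) (hpq : ∀ x ∈ p.support, x ∈ q.support → x = v) : (p.append q).IsPath := by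
  rw [SimpleGraph.Walk.isPath_def, SimpleGraph.Walk.support_append]
  have hq' : v ∉ q.support.tail ∧ q.support.tail.Nodup := by
    rw [← List.nodup_cons, q.cons_tail_support]
    exact hq.support_nodup
  refine hp.support_nodup.append hq'.2 fun x hxp hxq => ?_
  obtain rfl := hpq x hxp (List.mem_of_mem_tail hxq)
  exact hq'.1 hxq

theorem exists_isPath_inter_subset_singleton (hG : G.Connected) {M : Set V} (hM : M.Nonempty)
    (x : V) : ∃ y ∈ M, ∃ p : G.Walk x y, p.IsPath ∧ ∀ z ∈ p.support, z ∈ M → z = y := by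
  classical
  obtain ⟨y, hy, hmin⟩ := exists_minimalFor_of_wellFoundedLT (· ∈ M) (G.dist x) hM
  obtain ⟨p, hp, hlen⟩ := hG.exists_path_of_dist x y
  refine ⟨y, hy, p, hp, fun z hz hzM => ?_⟩
  by_contra hne
  have hshort : (p.takeUntil z hz).length < p.length := p.length_takeUntil_lt_length hz hne
  have hdist : G.dist x z < G.dist x y :=
    hlen ▸ (SimpleGraph.dist_le (p.takeUntil z hz)).trans_lt hshort
  exact hdist.not_ge (hmin hzM hdist.le)

theorem exists_gate_of_isTree (hG : G.IsTree) {M : Set V} (hM : (G.induce M).Connected) (x : V) :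
    ∃ y ∈ M, ∀ N : Set V, (G.induce N).Connected → x ∈ N → (N ∩ M).Nonempty → y ∈ N := by
  obtain ⟨⟨m, hm⟩⟩ := hM.nonempty
  obtain ⟨y, hy, s, hs, hsM⟩ := exists_isPath_inter_subset_singleton hG.connected ⟨m, hm⟩ x
  refine ⟨y, hy, fun N hN hxN ⟨z, hzN, hzM⟩ => ?_⟩
  obtain ⟨q, hq, hqM⟩ := exists_isPath_of_connected_induce hM hy hzM
  obtain ⟨p, hp, hpN⟩ := exists_isPath_of_connected_induce hN hxN hzN
  have hsq : (s.append q).IsPath := isPath_append hs hq fun v hvs hvq => hsM v hvs (hqM v hvq)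
  have hpeq : p = s.append q := (hG.existsUnique_path x z).unique hp hsq
  exact hpN y (hpeq ▸ (SimpleGraph.Walk.mem_support_append_iff ..).2 (Or.inl s.end_mem_support))

theorem TreeDecomp.connected_induce_nodes (D : TreeDecomp G) {C : Set V}
    (hC : (G.induce C).Connected) : (D.T.induce {s | (D.bag s ∩ C).Nonempty}).Connected := by
  set M := {s | (D.bag s ∩ C).Nonempty}
  have nodes_subset : ∀ c ∈ C, {s | c ∈ D.bag s} ⊆ M := fun c hc s hs => ⟨c, hs, hc⟩
  obtain ⟨⟨c₀, hc₀⟩⟩ := hC.nonempty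
  obtain ⟨⟨s₀, hs₀⟩⟩ := (D.subtree c₀).nonempty
  have hs₀M : s₀ ∈ M := nodes_subset c₀ hc₀ hs₀
  set K := componentIn D.T M s₀
  have subset_of_meets : ∀ c ∈ C, ∀ s ∈ K, c ∈ D.bag s → {s | c ∈ D.bag s} ⊆ K :=
    fun c hc s hsK hcs => subset_componentIn (D.subtree c) (nodes_subset c hc) ⟨s, hcs, hsK⟩
  have hCK : C ⊆ {c | {s | c ∈ D.bag s} ⊆ K} := by
    refine subset_of_connected_induce hC
      ⟨c₀, hc₀, subset_of_meets c₀ hc₀ s₀ (mem_componentIn_self hs₀M) hs₀⟩ ?_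
    rintro a ⟨-, ha⟩ b hb hab
    obtain ⟨s, has, hbs⟩ := D.edge_bag a b hab
    exact subset_of_meets b hb s (ha has) hbs
  have hMK : M = K := by
    refine Set.Subset.antisymm ?_ componentIn_subset
    rintro s ⟨c, hcs, hc⟩
    exact hCK hc hcs
  rw [hMK]
  exact connected_induce_componentIn hs₀M

/-- A cover of the vertices by sets of size at most `t` such that every set `U` contained in a
member `B` can be moved towards any connected set `C` to which all its vertices are adjacent, that
is, into a member meeting `C`. This is the only property of tree decompositions that is needed. -/
structure IsBagFamily (G : SimpleGraph V) (t : ℕ) (𝓑 : Set (Set V)) : Prop where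
  ncard_le : ∀ B ∈ 𝓑, B.ncard ≤ t
  exists_mem : ∀ v, ∃ B ∈ 𝓑, v ∈ B
  exists_meets : ∀ B ∈ 𝓑, ∀ U ⊆ B, ∀ C, (G.induce C).Connected →
    (∀ u ∈ U, ∃ c ∈ C, G.Adj u c) → ∃ B' ∈ 𝓑, U ⊆ B' ∧ (B' ∩ C).Nonempty

theorem TreeDecomp.isBagFamily (D : TreeDecomp G) (hD : ∀ s, (D.bag s).ncard ≤ t) :
    IsBagFamily G t (Set.range D.bag) where
  ncard_le := by
    rintro _ ⟨s, rfl⟩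
    exact hD s
  exists_mem v := by
    obtain ⟨⟨s, hs⟩⟩ := (D.subtree v).nonempty
    exact ⟨D.bag s, ⟨s, rfl⟩, hs⟩
  exists_meets := by
    rintro _ ⟨s, rfl⟩ U hU C hC hUC
    obtain ⟨y, hy, hgate⟩ := exists_gate_of_isTree D.isTree (D.connected_induce_nodes hC) s
    refine ⟨D.bag y, ⟨y, rfl⟩, fun u hu => ?_, hy⟩
    obtain ⟨c, hc, huc⟩ := hUC u hu
    obtain ⟨z, huz, hcz⟩ := D.edge_bag u c huc
    exact hgate {s | u ∈ D.bag s} (D.subtree u) (hU hu) ⟨z, huz, c, hcz, hc⟩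

theorem nonempty_treeDecomp (G : SimpleGraph V) : Nonempty (TreeDecomp G) :=
  ⟨{ n := 1
     T := ⊥
     isTree := .of_subsingleton
     bag := fun _ => Set.univ
     edge_bag := fun _ _ _ => ⟨0, trivial, trivial⟩
     subtree := fun v =>
      have : Nonempty {_s : Fin 1 | v ∈ Set.univ} := ⟨⟨0, trivial⟩⟩
      .of_subsingleton }⟩

theorem exists_isBagFamily_of_treewidth_lt (h : treewidth G < t) : ∃ 𝓑, IsBagFamily G t 𝓑 := by
  obtain ⟨D₀⟩ := nonempty_treeDecomp G
  obtain ⟨D, hD⟩ : ∃ D : TreeDecomp G, D.width = treewidth G := 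
    Nat.sInf_mem (s := {w | ∃ D : TreeDecomp G, D.width = w}) ⟨_, D₀, rfl⟩
  refine ⟨Set.range D.bag, D.isBagFamily fun s => ?_⟩
  have hs : (D.bag s).ncard ≤ ⨆ s, (D.bag s).ncard :=
    le_ciSup (f := fun s => (D.bag s).ncard) (Set.finite_range _).bddAbove s
  rw [← hD, TreeDecomp.width] at h
  omega

end TreeDecompositions

section Shadows

variable {V : Type*} {G : SimpleGraph V} {P : Set V → Prop} {C K D W : Set V} {r u v : V}

/-- The shadow of `C` in `D`, with the light at `r`: the set `C` together with the vertices of `D`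
that it separates from `r`. It is all of `D` if `r ∈ C`. -/
def shadow (G : SimpleGraph V) (D : Set V) (r : V) (C : Set V) : Set V :=
  D \ componentIn G (D \ C) r

theorem shadow_subset : shadow G D r C ⊆ D :=
  Set.sdiff_subset

theorem subset_shadow (hC : C ⊆ D) : C ⊆ shadow G D r C :=
  fun _ hv => ⟨hC hv, fun h => (componentIn_subset h).2 hv⟩

theorem shadow_self : shadow G D r D = D :=
  shadow_subset.antisymm (subset_shadow subset_rfl)

theorem mem_of_mem_shadow (hr : r ∈ shadow G D r C) : r ∈ C :=
  by_contra fun hrC => hr.2 (mem_componentIn_self ⟨hr.1, hrC⟩)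

theorem shadow_subset_shadow (h : K ⊆ shadow G D r C) : shadow G D r K ⊆ shadow G D r C := by
  rintro v ⟨hvD, hvK⟩
  refine ⟨hvD, fun hvC => hvK ?_⟩
  have hr : r ∈ D \ C := hvC.elim fun p hp => hp r p.start_mem_support
  have hsub : componentIn G (D \ C) r ⊆ D \ K := fun x hx =>
    ⟨(componentIn_subset hx).1, fun hxK => (h hxK).2 hx⟩
  have hrC : r ∈ componentIn G (D \ C) r := mem_componentIn_self hr
  exact subset_componentIn (connected_induce_componentIn hr) hsub
    ⟨r, hrC, mem_componentIn_self (hsub hrC)⟩ hvC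

theorem mem_of_adj_of_mem_shadow (hu : u ∈ componentIn G (D \ C) r) (hv : v ∈ shadow G D r C)
    (huv : G.Adj u v) : v ∈ C :=
  by_contra fun hvC => hv.2 (mem_componentIn_of_adj hu ⟨hv.1, hvC⟩ huv)

theorem boundaryIn_shadow_subset : boundaryIn G D (shadow G D r C) ⊆ boundaryIn G D C := by
  rintro v ⟨⟨hvD, hv⟩, a, ha, hva⟩
  have hvC : v ∈ componentIn G (D \ C) r := by_contra fun h => hv ⟨hvD, h⟩
  exact ⟨componentIn_subset hvC, a, mem_of_adj_of_mem_shadow hvC ha hva, hva⟩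

theorem nonempty_inter_of_shadow_eq (hD : (G.induce D).Connected) (hC : C ⊆ D)
    (hCne : C.Nonempty) (hr : r ∈ D \ K) (heq : shadow G D r K = shadow G D r C) :
    (K ∩ C).Nonempty := by
  obtain ⟨c, hc⟩ := hCne
  have hcK : c ∈ shadow G D r K := heq ▸ subset_shadow hC hc
  obtain ⟨a, ⟨haD, haK⟩, b, hb, hab⟩ := exists_adj_of_connected_induce hD
    ⟨r, hr.1, mem_componentIn_self hr⟩ fun hsub => hcK.2 (hsub (hC hc))
  have haC : a ∈ componentIn G (D \ C) r := by
    have ha : a ∉ shadow G D r C := heq ▸ fun h => h.2 haK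
    exact by_contra fun h => ha ⟨haD, h⟩
  exact ⟨b, mem_of_adj_of_mem_shadow haK hb hab, mem_of_adj_of_mem_shadow haC (heq ▸ hb) hab⟩

theorem exists_adj_componentIn_diff_union (hr : r ∈ D \ (C ∪ K))
    (hC : (C ∩ componentIn G (D \ K) r).Nonempty) :
    ∃ x ∈ componentIn G (D \ (C ∪ K)) r, ∃ c ∈ C, G.Adj x c := by
  obtain ⟨c, hcC, hc⟩ := hC
  have hrK : r ∈ D \ K := ⟨hr.1, fun h => hr.2 (Or.inr h)⟩
  obtain ⟨a, ha, b, hb, hab⟩ := exists_adj_of_connected_induce (connected_induce_componentIn hrK)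
    ⟨r, mem_componentIn_self hrK, mem_componentIn_self hr⟩
    fun hsub => (componentIn_subset (hsub hc)).2 (Or.inl hcC)
  refine ⟨a, ha.2, b, by_contra fun hbC => hb.2 ?_, hab⟩
  have hbK : b ∈ D \ K := componentIn_subset hb.1
  exact mem_componentIn_of_adj ha.2 ⟨hbK.1, not_or.2 ⟨hbC, hbK.2⟩⟩ hab

theorem hasFork_of_disjoint (hC : P C) (hK : P K) (hCK : Disjoint C K) (hCD : C ⊆ D)
    (hKD : K ⊆ D) (hr : r ∈ D \ (C ∪ K)) (hCr : (C ∩ componentIn G (D \ K) r).Nonempty)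
    (hKr : (K ∩ componentIn G (D \ C) r).Nonempty) : HasFork G P D r := by
  have hX : componentIn G (D \ (C ∪ K)) r ⊆ D \ (C ∪ K) := componentIn_subset
  refine ⟨componentIn G (D \ (C ∪ K)) r, fun b => cond b C K,
    { root_mem := mem_componentIn_self hr
      connected := connected_induce_componentIn hr
      disjoint_root := fun
        | true => Set.disjoint_left.2 fun x hx h => (hX hx).2 (Or.inl h)
        | false => Set.disjoint_left.2 fun x hx h => (hX hx).2 (Or.inr h)
      disjoint_branches := pairwise_disjoint_on_bool.2 hCK
      branch := Bool.forall_bool.2 ⟨hK, hC⟩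
      adj := Bool.forall_bool.2 ⟨?_, exists_adj_componentIn_diff_union hr hCr⟩ },
    hX.trans Set.sdiff_subset, Bool.forall_bool.2 ⟨hKD, hCD⟩⟩
  rw [Set.union_comm] at hr ⊢
  exact exists_adj_componentIn_diff_union hr hKr

/-- A property of connected sets that is inherited by connected supersets. -/
structure IsConnectedUpperProperty (G : SimpleGraph V) (P : Set V → Prop) : Prop where
  connected : ∀ {S : Set V}, P S → (G.induce S).Connected
  mono : ∀ {S S' : Set V}, P S → S ⊆ S' → (G.induce S').Connected → P S'

theorem isConnectedUpperProperty_isRich (G : SimpleGraph V) (k : ℕ) :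
    IsConnectedUpperProperty G (IsRich G k) :=
  ⟨IsRich.connected, IsRich.mono⟩

variable [Finite V]

-- If a component of `W` satisfying `P` is not inside the maximal shadow, neither of the two
-- components hides the other from `r`, so they form a fork.
theorem exists_componentIn_forall_not_of_not_hasFork (hP : IsConnectedUpperProperty G P)
    (hfork : ¬ HasFork G P D r) (hWD : W ⊆ D) (hr : r ∈ D \ W) (hW : ∃ K ⊆ W, P K) :
    ∃ v, P (componentIn G W v) ∧ ∀ K ⊆ W \ shadow G D r (componentIn G W v), ¬ P K := by
  have hcomp : ∀ K ⊆ W, P K → ∀ x ∈ K, P (componentIn G W x) := fun K hKW hK x hx =>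
    hP.mono hK
      (subset_componentIn (hP.connected hK) hKW ⟨x, hx, mem_componentIn_self (hKW hx)⟩)
      (connected_induce_componentIn (hKW hx))
  obtain ⟨v, ⟨-, hv⟩, hmax⟩ := (Set.toFinite {v ∈ W | P (componentIn G W v)}).exists_maximalFor
    (fun v => shadow G D r (componentIn G W v)) _ <| by
      obtain ⟨K, hKW, hK⟩ := hW
      obtain ⟨⟨x, hx⟩⟩ := (hP.connected hK).nonempty
      exact ⟨x, hKW hx, hcomp K hKW hK x hx⟩
  refine ⟨v, hv, fun K hKW hK => hfork ?_⟩
  obtain ⟨⟨x, hxK⟩⟩ := (hP.connected hK).nonempty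
  obtain ⟨hxW, hxv⟩ := hKW hxK
  have hx : P (componentIn G W x) := hcomp K (hKW.trans Set.sdiff_subset) hK x hxK
  have hxx : x ∈ componentIn G W x := mem_componentIn_self hxW
  have hCW : ∀ y, componentIn G W y ⊆ W := fun _ => componentIn_subset
  have hCD : ∀ y, componentIn G W y ⊆ D := fun y => (hCW y).trans hWD
  have hdisj : Disjoint (componentIn G W v) (componentIn G W x) := by
    by_contra hmeet
    rw [disjoint_comm, Set.not_disjoint_iff_nonempty_inter] at hmeet
    exact hxv (subset_shadow (hCD v) (subset_componentIn (hP.connected hx) (hCW x) hmeet hxx))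
  refine hasFork_of_disjoint hv hx hdisj (hCD v) (hCD x)
    ⟨hr.1, fun h => hr.2 (h.elim (hCW v ·) (hCW x ·))⟩ ?_
    ⟨x, hxx, by_contra fun h => hxv ⟨hWD hxW, h⟩⟩
  by_contra hhidden
  have hsub : componentIn G W v ⊆ shadow G D r (componentIn G W x) := fun y hy =>
    ⟨hCD v hy, fun h => hhidden ⟨y, hy, h⟩⟩
  exact hxv (hmax ⟨hxW, hx⟩ (shadow_subset_shadow hsub) (subset_shadow (hCD x) hxx))

end Shadows

section SweepingAShadow

variable {V : Type*} {G : SimpleGraph V} {P : Set V → Prop} {B C K D Y : Set V} {r v : V}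
  {t w k : ℕ} {𝓑 : Set (Set V)}

theorem boundaryIn_componentIn_shadow_diff_subset (hCB : boundaryIn G D C ⊆ B) :
    boundaryIn G D (componentIn G (shadow G D r C \ B) v) ⊆ B := by
  rintro x ⟨⟨hxD, hx⟩, a, ha, hxa⟩
  by_contra hxB
  by_cases hxC : x ∈ shadow G D r C
  · exact hx (mem_componentIn_of_adj ha ⟨hxC, hxB⟩ hxa.symm)
  · exact hxB (hCB (boundaryIn_shadow_subset ⟨⟨hxD, hxC⟩, a, (componentIn_subset ha).1, hxa⟩))

theorem toLex_shadow_lt_toLex_shadow (hD : (G.induce D).Connected) (hCD : C ⊆ D)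
    (hCB : boundaryIn G D C ⊆ B) (hmeet : (C ∩ B).Nonempty) (hK : (G.induce K).Connected)
    (hKC : K ⊆ shadow G D r C \ B) (hr : r ∈ D \ K) :
    toLex (shadow G D r K, K) < toLex (shadow G D r C, C) := by
  refine Prod.Lex.toLex_lt_toLex'.2
    ⟨shadow_subset_shadow (hKC.trans Set.sdiff_subset), fun heq => ?_⟩
  have hsub : K ⊆ C := by
    refine subset_of_connected_induce hK
      (nonempty_inter_of_shadow_eq hD hCD (hmeet.mono Set.inter_subset_left) hr heq) ?_
    rintro a ⟨-, haC⟩ b hbK hab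
    by_contra hbC
    exact (hKC hbK).2 (hCB ⟨⟨(hKC hbK).1.1, hbC⟩, a, haC, hab.symm⟩)
  obtain ⟨c, hcC, hcB⟩ := hmeet
  exact ⟨hsub, fun h => (hKC (h hcC)).2 hcB⟩

variable [Finite V]

theorem sweep_shadow (h𝓑 : IsBagFamily G t 𝓑) (hP : IsConnectedUpperProperty G P)
    (hsweep : ∀ Y, (∀ K ⊆ Y, ¬ P K) → Sweep G w Y ∅) (hD : (G.induce D).Connected)
    (hrD : r ∈ D) (hfork : ¬ HasFork G P D r) (hB : B ∈ 𝓑) (hCD : C ⊆ D)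
    (hCB : boundaryIn G D C ⊆ B) (hmeet : (C ∩ B).Nonempty) (hrC : r ∉ C \ B) :
    Sweep G (w + t) (shadow G D r C) (boundaryIn G D (shadow G D r C)) := by
  induction h : toLex (shadow G D r C, C) using WellFoundedLT.induction generalizing B C with
  | ind _ ih =>
    subst h
    set W := shadow G D r C \ B
    have hrW : r ∈ D \ W := ⟨hrD, fun h => hrC ⟨mem_of_mem_shadow h.1, h.2⟩⟩
    have hw : w + B.ncard ≤ w + t := Nat.add_le_add_left (h𝓑.ncard_le B hB) w
    have hbd : boundaryIn G D (shadow G D r C) ⊆ B := boundaryIn_shadow_subset.trans hCB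
    by_cases hW : ∃ K ⊆ W, P K
    · obtain ⟨v, hv, hrest⟩ := exists_componentIn_forall_not_of_not_hasFork hP hfork
        (Set.sdiff_subset.trans shadow_subset) hrW hW
      set K := componentIn G W v
      have hKW : K ⊆ W := componentIn_subset
      have hKC : K ⊆ shadow G D r C := hKW.trans Set.sdiff_subset
      have hrK : r ∉ K := fun h => hrW.2 (hKW h)
      have hKB : boundaryIn G D K ⊆ B := boundaryIn_componentIn_shadow_diff_subset hCB
      obtain ⟨B', hB', hKB', hmeet'⟩ :=
        h𝓑.exists_meets B hB _ hKB K (hP.connected hv) fun u hu => hu.2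
      have hlt := toLex_shadow_lt_toLex_shadow hD hCD hCB hmeet (hP.connected hv) hKW ⟨hrD, hrK⟩
      have hsweepK : Sweep G (w + t) (shadow G D r K) (boundaryIn G D (shadow G D r K)) :=
        ih _ hlt hB' (hKC.trans shadow_subset) hKB' (Set.inter_comm _ _ ▸ hmeet')
          (fun h => hrK h.1) rfl
      refine hsweepK.boundaryIn_of_subset (hsweep _ ?_) hw shadow_subset
        (shadow_subset_shadow hKC) hbd (boundaryIn_shadow_subset.trans hKB)
      rwa [Set.sdiff_sdiff_comm]
    · have hempty : boundaryIn G D ∅ = ∅ := by simp [boundaryIn]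
      refine Sweep.boundaryIn_of_subset (A₁ := ∅) (.nil ?_) (hsweep _ ?_) hw shadow_subset
        (Set.empty_subset _) hbd ?_
      · simp [hempty]
      · rw [Set.sdiff_empty]
        exact fun K hKW hK => hW ⟨K, hKW, hK⟩
      · simp [hempty]

theorem sweep_of_not_isForking (h𝓑 : IsBagFamily G t 𝓑) (hP : IsConnectedUpperProperty G P)
    (hsweep : ∀ Y, (∀ K ⊆ Y, ¬ P K) → Sweep G w Y ∅) (hD : (G.induce D).Connected)
    (hfork : ¬ IsForking G P D) : Sweep G (w + t) D ∅ := by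
  obtain ⟨r, hrD, hr⟩ : ∃ r ∈ D, ¬ HasFork G P D r := by
    by_contra! h
    exact hfork ⟨hD, h⟩
  obtain ⟨B, hB, hrB⟩ := h𝓑.exists_mem r
  have hbd : boundaryIn G D D = ∅ := by simp [boundaryIn]
  have hsweepD := sweep_shadow h𝓑 hP hsweep hD hrD hr hB subset_rfl
    (hbd ▸ Set.empty_subset B) ⟨r, hrD, hrB⟩ fun h => h.2 hrB
  rwa [shadow_self, hbd] at hsweepD

theorem sweep_of_forall_not_isRich (h𝓑 : IsBagFamily G t 𝓑) (hY : ∀ K ⊆ Y, ¬ IsRich G k K) :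
    Sweep G (t * k) Y ∅ := by
  induction k generalizing Y with
  | zero => exact .of_forall_connected fun K hK hconn => absurd hconn (hY K hK)
  | succ k ih =>
    exact .of_forall_connected fun K hK hconn =>
      sweep_of_not_isForking h𝓑 (isConnectedUpperProperty_isRich G k) (fun _ => ih) hconn (hY K hK)

end SweepingAShadow

theorem stmt_2_general {V : Type*} [Finite V] {G : SimpleGraph V} {t h : ℕ}
    (htw : treewidth G < t) (hminor : ¬ IsMinor (completeBinaryTree (h + 1)) G) :
    pathwidth G ≤ t * h - 1 := by
  obtain ⟨𝓑, h𝓑⟩ := exists_isBagFamily_of_treewidth_lt htw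
  have hsweep : Sweep G (t * h) Set.univ ∅ :=
    sweep_of_forall_not_isRich h𝓑 fun _ _ hK => hminor hK.isMinor_completeBinaryTree
  exact hsweep.pathwidth_le

/-- There is a universal constant `C` such that every finite simple graph of treewidth
less than `t` with no complete binary tree of height `h` as a minor has pathwidth at
most `C * t * h`. -/
theorem stmt_2 : ∃ C : ℕ, ∀ (V : Type) [Fintype V] (G : SimpleGraph V) (t h : ℕ),
    0 < t → 0 < h →
    treewidth G < t → ¬ IsMinor (completeBinaryTree h) G →
    pathwidth G ≤ C * t * h := by
  refine ⟨1, fun V _ G t h _ hh htw hminor => ?_⟩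
  obtain ⟨k, rfl⟩ := Nat.exists_eq_add_one.2 hh
  calc pathwidth G ≤ t * k - 1 := stmt_2_general htw hminor
    _ ≤ t * k := Nat.sub_le _ _
    _ ≤ 1 * t * (k + 1) := by gcongr <;> omega
end

section
/- Every finite simple graph G has a path decomposition of width exactly pw(G) that is linked. -/
/-- A `k`-linkage between `A` and `B` in `G`: `k` pairwise vertex-disjoint paths,
each starting in `A` and ending in `B`. -/
structure Linkage {V : Type*} (G : SimpleGraph V) (k : ℕ) (A B : Set V) where
  first : Fin k → V
  last : Fin k → V
  walk : ∀ i, G.Walk (first i) (last i)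
  isPath : ∀ i, (walk i).IsPath
  first_mem : ∀ i, first i ∈ A
  last_mem : ∀ i, last i ∈ B
  disjoint : ∀ i j, i ≠ j → ∀ x, x ∈ (walk i).support → x ∉ (walk j).support

/-- The subgraph of `G` formed by a linkage. -/
noncomputable def Linkage.toSubgraph {V : Type*} {G : SimpleGraph V} {k : ℕ} {A B : Set V}
    (L : Linkage G k A B) : G.Subgraph :=
  ⨆ i, (L.walk i).toSubgraph

/-- A path decomposition is linked if between the bags of any two nodes `t, t'`
there is a `k`-linkage, where `k` is the minimum bag size over the nodes
between `t` and `t'`. -/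
def PathDecomp.IsLinked {V : Type*} {G : SimpleGraph V} (D : PathDecomp G) : Prop :=
  ∀ t t' : Fin D.n,
    Nonempty (Linkage G
      (sInf { k | ∃ s : Fin D.n, min t t' ≤ s ∧ s ≤ max t t' ∧ k = (D.bag s).ncard })
      (D.bag t) (D.bag t'))

/-- A separation of `G`: two sides covering the vertices such that every edge lies inside a side. -/
@[ext]
structure Separation {V : Type*} (G : SimpleGraph V) where
  left : Set V
  right : Set V
  mem_or_mem : ∀ v, v ∈ left ∨ v ∈ right
  adj : ∀ u v, G.Adj u v → (u ∈ left ∧ v ∈ left) ∨ (u ∈ right ∧ v ∈ right)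

namespace Separation

variable {V : Type*} {G : SimpleGraph V}

/-- Separations are ordered from left to right: the left side grows and the right side shrinks.
The lattice operations are the two corners of a pair of crossing separations. -/
instance : Lattice (Separation G) where
  le S T := S.left ⊆ T.left ∧ T.right ⊆ S.right
  le_refl _ := ⟨subset_rfl, subset_rfl⟩
  le_trans _ _ _ hST hTU := ⟨hST.1.trans hTU.1, hTU.2.trans hST.2⟩
  le_antisymm _ _ hST hTS :=
    Separation.ext (hST.1.antisymm hTS.1) (hTS.2.antisymm hST.2)
  sup S T :=
    { left := S.left ∪ T.left
      right := S.right ∩ T.right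
      mem_or_mem v := by grind [S.mem_or_mem v, T.mem_or_mem v]
      adj u v huv := by grind [S.adj u v huv, T.adj u v huv] }
  le_sup_left _ _ := ⟨Set.subset_union_left, Set.inter_subset_left⟩
  le_sup_right _ _ := ⟨Set.subset_union_right, Set.inter_subset_right⟩
  sup_le _ _ _ hSU hTU := ⟨Set.union_subset hSU.1 hTU.1, Set.subset_inter hSU.2 hTU.2⟩
  inf S T :=
    { left := S.left ∩ T.left
      right := S.right ∪ T.right
      mem_or_mem v := by grind [S.mem_or_mem v, T.mem_or_mem v]
      adj u v huv := by grind [S.adj u v huv, T.adj u v huv] }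
  inf_le_left _ _ := ⟨Set.inter_subset_left, Set.subset_union_left⟩
  inf_le_right _ _ := ⟨Set.inter_subset_right, Set.subset_union_right⟩
  le_inf _ _ _ hST hSU := ⟨Set.subset_inter hST.1 hSU.1, Set.union_subset hST.2 hSU.2⟩

instance : BoundedOrder (Separation G) where
  top := ⟨Set.univ, ∅, by simp, by simp⟩
  le_top _ := ⟨Set.subset_univ _, Set.empty_subset _⟩
  bot := ⟨∅, Set.univ, by simp, by simp⟩
  bot_le _ := ⟨Set.empty_subset _, Set.subset_univ _⟩

variable {S T : Separation G}

@[simp] lemma left_bot : (⊥ : Separation G).left = ∅ := rfl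
@[simp] lemma left_top : (⊤ : Separation G).left = Set.univ := rfl
@[simp] lemma left_inf : (S ⊓ T).left = S.left ∩ T.left := rfl
@[simp] lemma right_inf : (S ⊓ T).right = S.right ∪ T.right := rfl
@[simp] lemma left_sup : (S ⊔ T).left = S.left ∪ T.left := rfl
@[simp] lemma right_sup : (S ⊔ T).right = S.right ∩ T.right := rfl

lemma both_mem_or_both_mem (S : Separation G) {u v : V} (h : u = v ∨ G.Adj u v) :
    (u ∈ S.left ∧ v ∈ S.left) ∨ (u ∈ S.right ∧ v ∈ S.right) := by
  obtain rfl | huv := h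
  · simpa using S.mem_or_mem u
  · exact S.adj u v huv

/-- The vertices common to both sides. -/
def separator (S : Separation G) : Set V := S.left ∩ S.right

/-- The number of vertices common to both sides. -/
noncomputable def order (S : Separation G) : ℕ := S.separator.ncard

lemma order_inf_add_order_sup [Finite V] (S T : Separation G) :
    (S ⊓ T).order + (S ⊔ T).order = S.order + T.order := by
  have h_union : (S ⊓ T).separator ∪ (S ⊔ T).separator = S.separator ∪ T.separator := by
    ext v
    grind [separator, left_inf, right_inf, left_sup, right_sup, S.mem_or_mem v, T.mem_or_mem v]
  have h_inter : (S ⊓ T).separator ∩ (S ⊔ T).separator = S.separator ∩ T.separator := by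
    ext v
    grind [separator, left_inf, right_inf, left_sup, right_sup]
  simp only [order]
  rw [← Set.ncard_union_add_ncard_inter, ← Set.ncard_union_add_ncard_inter S.separator,
    h_union, h_inter]

lemma separator_sup_inf_subset {X : Separation G} (hST : S ≤ T) (hS : S.separator ⊆ X.left)
    (hT : T.separator ⊆ X.right) : ((X ⊔ S) ⊓ T).separator ⊆ X.separator := by
  rintro v ⟨⟨hvXS, hvT⟩, hvr⟩
  have hvS : v ∈ S.right := hvr.elim And.right (hST.2 ·)
  exact ⟨hvXS.elim id fun h => hS ⟨h, hvS⟩, hvr.elim And.left fun h => hT ⟨hvT, h⟩⟩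

lemma order_le_of_left_eq [Finite V] (h : S ≤ T) (h_left : S.left = T.left) :
    T.order ≤ S.order :=
  Set.ncard_le_ncard (Set.inter_subset_inter h_left.ge h.2)

lemma order_le_of_right_eq [Finite V] (h : S ≤ T) (h_right : S.right = T.right) :
    S.order ≤ T.order :=
  Set.ncard_le_ncard (Set.inter_subset_inter h.1 h_right.le)

/-- An elementary move from left to right, changing only one of the two sides. -/
def Step (S T : Separation G) : Prop := S ≤ T ∧ (S.left = T.left ∨ S.right = T.right)

namespace Step

lemma le (h : Step S T) : S ≤ T := h.1

lemma refl (S : Separation G) : Step S S := ⟨le_rfl, Or.inl rfl⟩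

lemma inf (h : Step S T) (Z : Separation G) : Step (S ⊓ Z) (T ⊓ Z) :=
  ⟨inf_le_inf_right Z h.le, h.2.imp (congrArg (· ∩ Z.left)) (congrArg (· ∪ Z.right))⟩

lemma sup (h : Step S T) (Z : Separation G) : Step (S ⊔ Z) (T ⊔ Z) :=
  ⟨sup_le_sup_right h.le Z, h.2.imp (congrArg (· ∪ Z.left)) (congrArg (· ∩ Z.right))⟩

lemma order_comonotone [Finite V] (h : Step S T) (Z : Separation G) :
    ((T ⊓ Z).order ≤ (S ⊓ Z).order ∧ (T ⊔ Z).order ≤ (S ⊔ Z).order) ∨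
      ((S ⊓ Z).order ≤ (T ⊓ Z).order ∧ (S ⊔ Z).order ≤ (T ⊔ Z).order) := by
  obtain ⟨hST, h_left | h_right⟩ := h
  · exact Or.inl ⟨order_le_of_left_eq (inf_le_inf_right Z hST) (congrArg (· ∩ Z.left) h_left),
      order_le_of_left_eq (sup_le_sup_right hST Z) (congrArg (· ∪ Z.left) h_left)⟩
  · exact Or.inr ⟨order_le_of_right_eq (inf_le_inf_right Z hST) (congrArg (· ∪ Z.right) h_right),
      order_le_of_right_eq (sup_le_sup_right hST Z) (congrArg (· ∩ Z.right) h_right)⟩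

end Step

lemma pairwise_le_of_isChain_step {l : List (Separation G)} (hl : l.IsChain Step) :
    l.Pairwise (· ≤ ·) :=
  (hl.imp fun _ _ => Step.le).pairwise

end Separation

/-- The linkage obtained by reversing all paths. -/
def Linkage.symm {V : Type*} {G : SimpleGraph V} {k : ℕ} {A B : Set V} (L : Linkage G k A B) :
    Linkage G k B A where
  first := L.last
  last := L.first
  walk i := (L.walk i).reverse
  isPath i := (L.isPath i).reverse
  first_mem := L.last_mem
  last_mem := L.first_mem
  disjoint i j hij x := by simpa using L.disjoint i j hij x

section Iterate

variable {α : Type*} {g : α → α} {A T : Set α}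

lemma eq_and_eq_of_iterate_eq_iterate (hg : Set.InjOn g Tᶜ) (hgA : Set.MapsTo g Tᶜ Aᶜ) {a b : α}
    (ha : a ∈ A) (hb : b ∈ A) {i j : ℕ} (hi : ∀ m < i, g^[m] a ∉ T) (hj : ∀ m < j, g^[m] b ∉ T)
    (h : g^[i] a = g^[j] b) : i = j ∧ a = b := by
  induction i generalizing j with
  | zero =>
    cases j with
    | zero => exact ⟨rfl, h⟩
    | succ j =>
      rw [Function.iterate_succ_apply', Function.iterate_zero, id] at h
      exact absurd (h ▸ ha) (hgA (hj j j.lt_succ_self))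
  | succ i ih =>
    cases j with
    | zero =>
      rw [Function.iterate_succ_apply', Function.iterate_zero, id] at h
      exact absurd (h ▸ hb) (hgA (hi i i.lt_succ_self))
    | succ j =>
      rw [Function.iterate_succ_apply', Function.iterate_succ_apply'] at h
      have h_pred : g^[i] a = g^[j] b := hg (hi i i.lt_succ_self) (hj j j.lt_succ_self) h
      simpa using ih (fun m hm => hi m (by lia)) (fun m hm => hj m (by lia)) h_pred

lemma exists_first_iterate_mem [Finite α] (hg : Set.InjOn g Tᶜ) (hgA : Set.MapsTo g Tᶜ Aᶜ)
    {a : α} (ha : a ∈ A) : ∃ n, g^[n] a ∈ T ∧ ∀ m < n, g^[m] a ∉ T := by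
  classical
  have h_mem : ∃ n, g^[n] a ∈ T := by
    by_contra! h
    refine not_injective_infinite_finite (fun n : ℕ => g^[n] a) fun i j hij => ?_
    exact (eq_and_eq_of_iterate_eq_iterate hg hgA ha ha (fun m _ => h m) (fun m _ => h m) hij).1
  exact ⟨Nat.find h_mem, Nat.find_spec h_mem, fun m => Nat.find_min h_mem⟩

lemma exists_isPath_iterate {G : SimpleGraph α} (hg : ∀ v ∉ T, g v = v ∨ G.Adj v (g v)) {a : α}
    {n : ℕ} (hn : ∀ m < n, g^[m] a ∉ T) :
    ∃ p : G.Walk a (g^[n] a), p.IsPath ∧ ∀ x ∈ p.support, ∃ i ≤ n, g^[i] a = x := by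
  classical
  suffices h : ∃ p : G.Walk a (g^[n] a), ∀ x ∈ p.support, ∃ i ≤ n, g^[i] a = x by
    obtain ⟨p, hp⟩ := h
    exact ⟨p.bypass, p.bypass_isPath, fun x hx => hp x (p.support_bypass_subset_support hx)⟩
  induction n with
  | zero => exact ⟨.nil, by simp⟩
  | succ n ih =>
    obtain ⟨p, hp⟩ := ih fun m hm => hn m (by lia)
    have hp' : ∀ x ∈ p.support, ∃ i ≤ n + 1, g^[i] a = x := fun x hx =>
      (hp x hx).imp fun i hi => ⟨by lia, hi.2⟩
    obtain h | h := hg _ (hn n n.lt_succ_self)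
    · rw [Function.iterate_succ_apply', h]
      exact ⟨p, hp'⟩
    · rw [← Function.iterate_succ_apply' g] at h
      refine ⟨p.concat h, fun x hx => ?_⟩
      rw [SimpleGraph.Walk.support_concat, List.mem_append, List.mem_singleton] at hx
      exact hx.elim (hp' x) fun hx => ⟨n + 1, le_rfl, hx.symm⟩

end Iterate

open Finset in
/-- Hall's theorem with deficiency `d`, by adding `d` new elements related to everything. -/
lemma exists_injOn_compl_of_card_le_card_add {α β : Type*} [Finite α] [Fintype β]
    [Nonempty (α → β)] (r : α → β → Prop) [DecidableRel r] (d : ℕ)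
    (h : ∀ U : Finset α, #U ≤ #{b | ∃ a ∈ U, r a b} + d) :
    ∃ (T : Finset α) (g : α → β), #T ≤ d ∧ Set.InjOn g (T : Set α)ᶜ ∧ ∀ a ∉ T, r a (g a) := by
  classical
  cases nonempty_fintype α
  let r' (a : α) : β ⊕ Fin d → Prop := Sum.elim (r a) fun _ => True
  have h_hall (U : Finset α) : #U ≤ #{x | ∃ a ∈ U, r' a x} := by
    obtain rfl | ⟨a₀, ha₀⟩ := U.eq_empty_or_nonempty
    · simp
    · have h_image : ({x | ∃ a ∈ U, r' a x} : Finset (β ⊕ Fin d)) =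
          ({b | ∃ a ∈ U, r a b} : Finset β).disjSum univ := by
        ext (b | i)
        · simp [r']
        · simpa [r'] using ⟨a₀, ha₀⟩
      simpa [h_image, card_disjSum] using h U
  obtain ⟨f, hf, hrf⟩ := (Fintype.all_card_le_filter_rel_iff_exists_injective r').1 h_hall
  obtain ⟨g₀⟩ := ‹Nonempty (α → β)›
  let T : Finset α := {a | (f a).isRight}
  let g (a : α) : β := (f a).elim id fun _ => g₀ a
  have hg (a : α) (ha : a ∉ T) : f a = Sum.inl (g a) := by
    obtain ⟨b, hb⟩ : ∃ b, f a = Sum.inl b := by simpa [T, Sum.isLeft_iff] using ha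
    simp [g, hb]
  refine ⟨T, g, ?_, fun a ha b hb hab => hf ?_, fun a ha => ?_⟩
  · have h_maps : Set.MapsTo f T (univ.map Function.Embedding.inr : Finset (β ⊕ Fin d)) :=
      fun a ha => by
        obtain ⟨i, hi⟩ : ∃ i, f a = Sum.inr i := by simpa [T, Sum.isRight_iff] using ha
        simp [hi]
    simpa using card_le_card_of_injOn f h_maps hf.injOn
  · rw [hg a ha, hg b hb, hab]
  · simpa [r', hg a ha] using hrf a

section Menger

open Finset

variable {V : Type*} {G : SimpleGraph V} {k : ℕ}

open Classical in
/-- The bound is the order of the separation `(A ∪ N, Uᶜ)`, where `N` is the set counted on the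
right-hand side. -/
lemma card_add_le_of_forall_le_order [Fintype V] {A B : Finset V}
    (h : ∀ S : Separation G, (A : Set V) ⊆ S.left → (B : Set V) ⊆ S.right → k ≤ S.order)
    {U : Finset V} (hU : Disjoint U B) :
    #U + k ≤ #{w | ∃ v ∈ U, w ∉ A ∧ (w = v ∨ G.Adj v w)} + #A := by
  set N : Finset V := {w | ∃ v ∈ U, w ∉ A ∧ (w = v ∨ G.Adj v w)}
  have hUN : U ⊆ A ∪ N := fun v hv => by grind
  let S : Separation G :=
    { left := ↑(A ∪ N)
      right := (U : Set V)ᶜ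
      mem_or_mem v := (Classical.em (v ∈ U)).imp (@hUN v) id
      adj u v huv := by
        have := huv.symm
        simp only [mem_coe, Set.mem_compl_iff]
        grind }
  have hS : k ≤ #((A ∪ N) \ U) := by
    have h_order := h S (by simp [S]) (by grind [Finset.disjoint_left])
    rwa [Separation.order, Separation.separator, ← Set.sdiff_eq, ← coe_sdiff,
      Set.ncard_coe_finset] at h_order
  have h_sdiff := card_sdiff_add_card_eq_card hUN
  have h_union := card_union_le A N
  lia

lemma exists_injOn_compl_successor [Finite V] {A B : Finset V}
    (h : ∀ S : Separation G, (A : Set V) ⊆ S.left → (B : Set V) ⊆ S.right → k ≤ S.order) :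
    ∃ (T : Finset V) (g : V → V), B ⊆ T ∧ #T + k ≤ #A + #B ∧ Set.InjOn g (T : Set V)ᶜ ∧
      ∀ v ∉ T, g v ∉ A ∧ (g v = v ∨ G.Adj v (g v)) := by
  classical
  cases nonempty_fintype V
  have hk : k ≤ #A := by simpa using card_add_le_of_forall_le_order h (disjoint_empty_left B)
  have : Nonempty (V → V) := ⟨id⟩
  obtain ⟨T, g, hT, hg, hr⟩ := exists_injOn_compl_of_card_le_card_add
    (fun v w => v ∉ B ∧ w ∉ A ∧ (w = v ∨ G.Adj v w)) (#A + #B - k) fun U => by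
      have hU := card_add_le_of_forall_le_order h (sdiff_disjoint (s := B) (t := U))
      have h_sub := card_le_card_sdiff_add_card (s := U) (t := B)
      simp only [mem_sdiff, and_assoc] at hU
      lia
  exact ⟨T, g, fun v hv => by_contra fun hvT => (hr v hvT).1 hv, by lia, hg,
    fun v hv => (hr v hv).2⟩

theorem menger [Finite V] {A B : Set V}
    (h : ∀ S : Separation G, A ⊆ S.left → B ⊆ S.right → k ≤ S.order) :
    Nonempty (Linkage G k A B) := by
  classical
  lift A to Finset V using A.toFinite
  lift B to Finset V using B.toFinite
  obtain ⟨T, g, hBT, hT, hg, hgA⟩ := exists_injOn_compl_successor h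
  have hmaps : Set.MapsTo g (T : Set V)ᶜ (A : Set V)ᶜ := fun v hv => (hgA v hv).1
  have h_hit (a : V) (ha : a ∈ A) := exists_first_iterate_mem hg hmaps (mem_coe.2 ha)
  choose! n hnT hn using h_hit
  have h_eq {a b : V} (ha : a ∈ A) (hb : b ∈ A) {i j : ℕ} (hi : i ≤ n a) (hj : j ≤ n b)
      (hij : g^[i] a = g^[j] b) : a = b :=
    (eq_and_eq_of_iterate_eq_iterate hg hmaps ha hb (fun m hm => hn a ha m (hm.trans_le hi))
      (fun m hm => hn b hb m (hm.trans_le hj)) hij).2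
  have h_good : k ≤ #{a ∈ A | g^[n a] a ∈ B} := by
    have h_bad : #{a ∈ A | g^[n a] a ∉ B} ≤ #(T \ B) :=
      card_le_card_of_injOn (fun a => g^[n a] a) (fun a ha => by simp_all)
        fun a ha b hb hab => h_eq (mem_filter.1 ha).1 (mem_filter.1 hb).1 le_rfl le_rfl hab
    have h_split := card_filter_add_card_filter_not (s := A) (fun a => g^[n a] a ∈ B)
    have h_sdiff := card_sdiff_add_card_eq_card hBT
    lia
  obtain ⟨e⟩ : Nonempty (Fin k ↪ {a ∈ A | g^[n a] a ∈ B}) :=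
    Function.Embedding.nonempty_of_card_le (by rwa [Fintype.card_fin, Fintype.card_coe])
  have heA (i : Fin k) : (e i).1 ∈ A := (mem_filter.1 (e i).2).1
  choose p hp hp_support using fun i : Fin k =>
    exists_isPath_iterate (fun v hv => (hgA v hv).2) (hn (e i) (heA i))
  refine ⟨⟨_, _, p, hp, heA, fun i => (mem_filter.1 (e i).2).2, fun i j hij x hxi hxj => hij ?_⟩⟩
  obtain ⟨a, ha, rfl⟩ := hp_support i x hxi
  obtain ⟨b, hb, hab⟩ := hp_support j _ hxj
  exact e.injective (Subtype.ext (h_eq (heA i) (heA j) ha hb hab.symm))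

end Menger

lemma exists_rel_and_not_of_isChain {α : Type*} {R : α → α → Prop} {P : α → Prop} {l : List α}
    {a b : α} (hl : l.IsChain R) (h_head : l.head? = some a) (h_last : l.getLast? = some b)
    (ha : P a) (hb : ¬P b) : ∃ x ∈ l, ∃ y ∈ l, R x y ∧ P x ∧ ¬P y := by
  by_contra! h
  have h_all : ∀ x ∈ l, P x := by
    refine hl.imp_of_mem_imp (S := fun x y => P x → P y) (fun x y hx hy hxy => h x hx y hy hxy)
      |>.induction P _ (fun x y hxy hx => hxy hx) fun hne => ?_
    rwa [Option.some.inj ((List.head?_eq_some_head hne).symm.trans h_head)]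
  exact hb (h_all b (List.mem_of_getLast? h_last))

open Multiset in
lemma isDershowitzMannaLT_add_map_add_map {ι α : Type*} [Preorder α] {I : Multiset ι}
    {f l r : ι → α} {σ : α} (K : Multiset α) (hσ : ∀ i ∈ I, σ < f i)
    (h_split : ∀ i ∈ I, (l i < f i ∧ r i < f i) ∨ ({l i, r i} : Multiset α) = {f i, σ})
    (h_lt : ∃ i ∈ I, l i < f i ∧ r i < f i) :
    IsDershowitzMannaLT (K + (I.map l + I.map r)) (K + I.map f) := by
  classical
  set J := I.filter fun i => l i < f i ∧ r i < f i
  set J' := I.filter fun i => ¬(l i < f i ∧ r i < f i)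
  have hI : I = J + J' := (filter_add_not _ I).symm
  have h_swap : J'.map l + J'.map r = J'.map f + J'.map fun _ => σ := by
    simp only [← bind_singleton, ← bind_add, singleton_add]
    refine bind_congr fun i hi => ?_
    obtain ⟨hiI, hi⟩ := mem_filter.1 hi
    exact (h_split i hiI).resolve_left hi
  obtain ⟨i₀, hi₀, hi₀_lt⟩ := h_lt
  have hi₀J : i₀ ∈ J := mem_filter.2 ⟨hi₀, hi₀_lt⟩
  refine ⟨K + J'.map f, (J'.map fun _ => σ) + (J.map l + J.map r), J.map f,
    fun h => by simp [map_eq_zero.1 h] at hi₀J, ?_, ?_, ?_⟩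
  · calc K + (I.map l + I.map r)
      _ = K + ((J'.map l + J'.map r) + (J.map l + J.map r)) := by
        rw [hI, map_add, map_add]; abel
      _ = K + J'.map f + ((J'.map fun _ => σ) + (J.map l + J.map r)) := by
        rw [h_swap]; abel
  · rw [hI, map_add, add_comm (J.map f), add_assoc]
  · simp only [mem_add, mem_map]
    rintro _ (⟨i, -, rfl⟩ | ⟨i, hi, rfl⟩ | ⟨i, hi, rfl⟩)
    · exact ⟨f i₀, ⟨i₀, hi₀J, rfl⟩, hσ i₀ hi₀⟩
    · exact ⟨f i, ⟨i, hi, rfl⟩, (mem_filter.1 hi).2.1⟩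
    · exact ⟨f i, ⟨i, hi, rfl⟩, (mem_filter.1 hi).2.2⟩

open Multiset in
lemma exists_le_of_isDershowitzMannaLT {α : Type*} [Preorder α] {M N : Multiset α}
    (h : IsDershowitzMannaLT M N) {x : α} (hx : x ∈ M) : ∃ y ∈ N, x ≤ y := by
  obtain ⟨X, Y, Z, -, rfl, rfl, hYZ⟩ := h
  obtain hx | hx := mem_add.1 hx
  · exact ⟨x, mem_add.2 (Or.inl hx), le_rfl⟩
  · obtain ⟨z, hz, hxz⟩ := hYZ x hx
    exact ⟨z, mem_add.2 (Or.inr hz), hxz.le⟩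

lemma mem_Icc_of_pairwise_le {α : Type*} [Preorder α] {l : List α} {a b c : α}
    (hl : l.Pairwise (· ≤ ·)) (ha : l.head? = some a) (hb : l.getLast? = some b) (hc : c ∈ l) :
    c ∈ Set.Icc a b :=
  ⟨(List.head_eq_iff_head?_eq_some _).2 ha ▸ hl.rel_head hc,
    (List.getLast_eq_iff_getLast?_eq_some _).2 hb ▸ hl.rel_getLast hc⟩

section Sweep

open Separation

variable {V : Type*} {G : SimpleGraph V}

/-- A sequence of separations moving from `(∅, V)` to `(V, ∅)` in elementary moves. Its separators
are the bags of a path decomposition, and every path decomposition refines to such a sequence. -/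
structure IsSweep (l : List (Separation G)) : Prop where
  isChain : l.IsChain Step
  head?_eq : l.head? = some ⊥
  getLast?_eq : l.getLast? = some ⊤

/-- No separation between the two ends of a segment of `l` has smaller order than all members of
this segment; for a sweep this is what makes the resulting path decomposition linked. -/
def IsTight (l : List (Separation G)) : Prop :=
  ∀ M a b Z, M <:+: l → M.head? = some a → M.getLast? = some b → Z ∈ Set.Icc a b →
    ∃ c ∈ M, c.order ≤ Z.order

lemma IsTight.exists_getElem_order_le {l : List (Separation G)} (hl : IsTight l)
    {s t : Fin l.length} (hst : s ≤ t) {Z : Separation G} (hZ : Z ∈ Set.Icc l[s] l[t]) :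
    ∃ u : Fin l.length, s ≤ u ∧ u ≤ t ∧ l[u].order ≤ Z.order := by
  have h_infix : (l.take (t + 1)).drop s <:+: l :=
    (List.drop_suffix _ _).isInfix.trans (List.take_prefix _ _).isInfix
  have h_head : ((l.take (t + 1)).drop s).head? = some l[s] := by
    rw [List.head?_drop, List.getElem?_take_of_lt (Nat.lt_succ_of_le hst), Fin.getElem_fin,
      List.getElem?_eq_getElem]
  have h_last : ((l.take (t + 1)).drop s).getLast? = some l[t] := by
    simp [List.getLast?_drop, List.getLast?_take, Nat.not_le.2 (Nat.lt_succ_of_le hst)]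
  obtain ⟨c, hc, hcZ⟩ := hl _ l[s] l[t] Z h_infix h_head h_last hZ
  obtain ⟨i, hi, rfl⟩ := List.mem_iff_getElem.1 hc
  simp only [List.length_drop, List.length_take, List.getElem_drop, List.getElem_take] at hi hcZ
  exact ⟨⟨s + i, by lia⟩, by simp [Fin.le_def], by simp only [Fin.le_def]; lia, hcZ⟩

namespace IsSweep

variable {A M M' C : List (Separation G)} {a b Z : Separation G}

lemma replace (hl : IsSweep (A ++ M ++ C)) (h_chain : M'.IsChain Step)
    (h_head : M'.head? = M.head?) (h_last : M'.getLast? = M.getLast?) :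
    IsSweep (A ++ M' ++ C) where
  isChain := by
    have h_old := hl.isChain
    simp only [List.isChain_append, List.getLast?_append, h_head, h_last] at h_old ⊢
    tauto
  head?_eq := by simpa only [List.head?_append, h_head] using hl.head?_eq
  getLast?_eq := by simpa only [List.getLast?_append, h_last] using hl.getLast?_eq

lemma splice (hl : IsSweep (A ++ M ++ C)) (ha : M.head? = some a) (hb : M.getLast? = some b)
    (hZ : Z ∈ Set.Icc a b) : IsSweep (A ++ (M.map (· ⊓ Z) ++ M.map (· ⊔ Z)) ++ C) := by
  have hM : M.IsChain Step := hl.isChain.infix ⟨A, C, rfl⟩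
  refine hl.replace (List.isChain_append.2 ⟨?_, ?_, ?_⟩) ?_ ?_
  · exact List.isChain_map_of_isChain _ (fun S T h => h.inf Z) hM
  · exact List.isChain_map_of_isChain _ (fun S T h => h.sup Z) hM
  · simp [ha, hb, hZ.1, hZ.2, Step.refl]
  · simp [ha, hZ.1]
  · simp [hb, hZ.2]

end IsSweep

section Split

variable [Finite V] {M : List (Separation G)} {a b c Z : Separation G}

lemma Separation.order_lt_and_order_lt_or_pair_eq_pair (h_inf : Z.order ≤ (c ⊓ Z).order)
    (h_sup : Z.order ≤ (c ⊔ Z).order) :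
    ((c ⊓ Z).order < c.order ∧ (c ⊔ Z).order < c.order) ∨
      ({(c ⊓ Z).order, (c ⊔ Z).order} : Multiset ℕ) = {c.order, Z.order} := by
  have h_add := order_inf_add_order_sup c Z
  obtain h | h := h_inf.eq_or_lt
  · have : (c ⊔ Z).order = c.order := by lia
    exact Or.inr (by rw [← h, this, Multiset.pair_comm])
  · obtain h' | h' := h_sup.eq_or_lt
    · have : (c ⊓ Z).order = c.order := by lia
      exact Or.inr (by rw [← h', this])
    · exact Or.inl (by lia)

/-- Otherwise each pair `(|c ⊓ Z|, |c ⊔ Z|)` would be `(|c|, |Z|)` or `(|Z|, |c|)`, starting with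
the former at `a` and ending with the latter at `b`; but along a step both entries move in the same
direction. -/
lemma Separation.exists_order_inf_lt_and_order_sup_lt (hM : M.IsChain Step)
    (ha : M.head? = some a) (hb : M.getLast? = some b) (hZ : Z ∈ Set.Icc a b)
    (h_min : ∀ Y ∈ Set.Icc a b, Z.order ≤ Y.order) (h_lt : ∀ c ∈ M, Z.order < c.order) :
    ∃ c ∈ M, (c ⊓ Z).order < c.order ∧ (c ⊔ Z).order < c.order := by
  obtain ⟨x, hx, y, hy, hxy, hx_sup, hy_sup⟩ := exists_rel_and_not_of_isChain
    (P := fun c => (c ⊔ Z).order = Z.order) hM ha hb (by simp [hZ.1])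
    (by simpa [hZ.2] using (h_lt b (List.mem_of_getLast? hb)).ne')
  have hx_add := order_inf_add_order_sup x Z
  have hy_add := order_inf_add_order_sup y Z
  have hy_Icc := mem_Icc_of_pairwise_le (pairwise_le_of_isChain_step hM) ha hb hy
  have hy_min := h_min (y ⊔ Z) ⟨hZ.1.trans le_sup_right, sup_le hy_Icc.2 hZ.2⟩
  have h_comonotone := hxy.order_comonotone Z
  have hx_lt := h_lt x hx
  exact ⟨y, hy, by lia⟩

lemma IsSweep.exists_isDershowitzMannaLT_of_not_isTight {l : List (Separation G)} (hl : IsSweep l)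
    (h : ¬IsTight l) : ∃ l' : List (Separation G), IsSweep l' ∧
      Multiset.IsDershowitzMannaLT (l'.map order : Multiset ℕ) (l.map order) := by
  simp only [IsTight, not_forall, not_exists, not_and, not_le] at h
  obtain ⟨M, a, b, Y, ⟨A, C, rfl⟩, ha, hb, hY, hY_lt⟩ := h
  obtain ⟨Z, hZ, hZ_min⟩ := exists_minimalFor_of_wellFoundedLT (· ∈ Set.Icc a b) order ⟨Y, hY⟩
  have h_min (X) (hX : X ∈ Set.Icc a b) : Z.order ≤ X.order :=
    (le_total _ _).elim id (hZ_min hX)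
  have h_lt (c) (hc : c ∈ M) : Z.order < c.order := (h_min Y hY).trans_lt (hY_lt c hc)
  have hM : M.IsChain Step := hl.isChain.infix ⟨A, C, rfl⟩
  have h_orders (N : List (Separation G)) : ((A ++ N ++ C).map order : Multiset ℕ) =
      (A.map order + C.map order) + (N.map order : Multiset ℕ) := by
    simp only [List.map_append, ← Multiset.coe_add]
    abel
  refine ⟨_, hl.splice ha hb hZ, ?_⟩
  rw [h_orders, h_orders, List.map_append, ← Multiset.coe_add, List.map_map, List.map_map]
  refine isDershowitzMannaLT_add_map_add_map (I := M) (l := fun c => (c ⊓ Z).order)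
    (r := fun c => (c ⊔ Z).order) _ h_lt (fun c hc => ?_)
    (exists_order_inf_lt_and_order_sup_lt hM ha hb hZ h_min h_lt)
  have hc_Icc := mem_Icc_of_pairwise_le (pairwise_le_of_isChain_step hM) ha hb hc
  exact order_lt_and_order_lt_or_pair_eq_pair
    (h_min _ ⟨le_inf hc_Icc.1 hZ.1, inf_le_right.trans hZ.2⟩)
    (h_min _ ⟨hZ.1.trans le_sup_right, sup_le hc_Icc.2 hZ.2⟩)

theorem IsSweep.exists_isTight {l : List (Separation G)} (hl : IsSweep l) :
    ∃ l' : List (Separation G), IsSweep l' ∧ IsTight l' ∧ ∀ S ∈ l', ∃ T ∈ l, S.order ≤ T.order := by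
  let orders (l : List (Separation G)) : Multiset ℕ := l.map order
  let s : Set (List (Separation G)) := {l' | IsSweep l' ∧ ∀ S ∈ l', ∃ T ∈ l, S.order ≤ T.order}
  have h_wf : WellFounded (InvImage Multiset.IsDershowitzMannaLT orders) :=
    InvImage.wf orders Multiset.wellFounded_isDershowitzMannaLT
  obtain ⟨l', ⟨hl', h_le⟩, h_min⟩ := h_wf.has_min s ⟨l, hl, fun S hS => ⟨S, hS, le_rfl⟩⟩
  refine ⟨l', hl', by_contra fun h => ?_, h_le⟩
  obtain ⟨l'', hl'', h_dm⟩ := hl'.exists_isDershowitzMannaLT_of_not_isTight h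
  refine h_min l'' ⟨hl'', fun S hS => ?_⟩ h_dm
  obtain ⟨_, h_mem, hST⟩ := exists_le_of_isDershowitzMannaLT h_dm
    (Multiset.mem_coe.2 (List.mem_map_of_mem hS))
  obtain ⟨T, hT, rfl⟩ := List.mem_map.1 (Multiset.mem_coe.1 h_mem)
  obtain ⟨U, hU, hTU⟩ := h_le T hT
  exact ⟨U, hU, hST.trans hTU⟩

end Split

end Sweep

namespace PathDecomp

variable {V : Type*} {G : SimpleGraph V}

/-- The cuts of a path decomposition with bags `B₀, …, Bₙ₋₁`: at an odd time `2i + 1` it is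
`(B₀ ∪ ⋯ ∪ Bᵢ, Bᵢ ∪ ⋯ ∪ Bₙ₋₁)`, at an even time `2i` it is `(B₀ ∪ ⋯ ∪ Bᵢ₋₁, Bᵢ ∪ ⋯ ∪ Bₙ₋₁)`. -/
def cut (D : PathDecomp G) (m : ℕ) : Separation G where
  left := {v | ∃ j : Fin D.n, 2 * (j : ℕ) < m ∧ v ∈ D.bag j}
  right := {v | ∃ j : Fin D.n, m ≤ 2 * (j : ℕ) + 1 ∧ v ∈ D.bag j}
  mem_or_mem v := by
    obtain ⟨j, hj⟩ := D.mem_bag v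
    exact (lt_or_ge (2 * (j : ℕ)) m).imp (⟨j, ·, hj⟩) fun h => ⟨j, by lia, hj⟩
  adj u v huv := by
    obtain ⟨j, hu, hv⟩ := D.edge_bag u v huv
    exact (lt_or_ge (2 * (j : ℕ)) m).imp (fun h => ⟨⟨j, h, hu⟩, j, h, hv⟩)
      fun h => ⟨⟨j, by lia, hu⟩, j, by lia, hv⟩

variable (D : PathDecomp G)

lemma cut_zero : D.cut 0 = ⊥ := by
  refine le_bot_iff.1 ⟨?_, fun v _ => ?_⟩
  · rintro v ⟨j, hj, -⟩
    exact absurd hj (Nat.not_lt_zero _)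
  · obtain ⟨j, hj⟩ := D.mem_bag v
    exact ⟨j, Nat.zero_le _, hj⟩

lemma cut_two_mul_n : D.cut (2 * D.n) = ⊤ := by
  refine top_le_iff.1 ⟨fun v _ => ?_, ?_⟩
  · obtain ⟨j, hj⟩ := D.mem_bag v
    exact ⟨j, by lia, hj⟩
  · rintro v ⟨j, hj, -⟩
    lia

lemma step_cut_succ (m : ℕ) : (D.cut m).Step (D.cut (m + 1)) := by
  refine ⟨⟨?_, ?_⟩, ?_⟩
  · exact fun v ⟨j, hj, hv⟩ => ⟨j, by lia, hv⟩
  · exact fun v ⟨j, hj, hv⟩ => ⟨j, by lia, hv⟩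
  · obtain hm | hm := m.even_or_odd
    · have h_iff (j : ℕ) : m ≤ 2 * j + 1 ↔ m + 1 ≤ 2 * j + 1 := by grind
      exact Or.inr (by simp only [cut, h_iff])
    · have h_iff (j : ℕ) : 2 * j < m ↔ 2 * j < m + 1 := by grind
      exact Or.inl (by simp only [cut, h_iff])

lemma exists_separator_cut_subset_bag {m : ℕ} (h : (D.cut m).separator.Nonempty) :
    ∃ t, (D.cut m).separator ⊆ D.bag t := by
  obtain ⟨-, ⟨i, hi, -⟩, j, hj, -⟩ := h
  refine ⟨⟨(m - 1) / 2, by lia⟩, ?_⟩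
  rintro v ⟨⟨i, hi, hvi⟩, j, hj, hvj⟩
  exact D.convex v i _ j (Fin.mk_le_mk.2 (by lia)) (Fin.mk_le_mk.2 (by lia)) hvi hvj

lemma order_cut_le [Finite V] (m : ℕ) : (D.cut m).order ≤ ⨆ t, (D.bag t).ncard := by
  obtain h | h := (D.cut m).separator.eq_empty_or_nonempty
  · simp [Separation.order, h]
  · obtain ⟨t, ht⟩ := D.exists_separator_cut_subset_bag h
    exact (Set.ncard_le_ncard ht).trans
      (le_ciSup (f := fun t => (D.bag t).ncard) (Set.finite_range _).bddAbove t)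

lemma isSweep_cut : IsSweep ((List.range (2 * D.n + 1)).map D.cut) where
  isChain := List.isChain_map_of_isChain (R := fun i j => j = i + 1) D.cut
    (fun i j hij => hij ▸ D.step_cut_succ i) (List.isChain_range_succ _ _ |>.2 fun _ _ => rfl)
  head?_eq := by simp [List.head?_range, D.cut_zero]
  getLast?_eq := by simp [List.getLast?_range, D.cut_two_mul_n]

end PathDecomp

namespace IsSweep

variable {V : Type*} {G : SimpleGraph V} {l : List (Separation G)}

lemma exists_mem_separator (hl : IsSweep l) {u v : V} (huv : u = v ∨ G.Adj u v) :
    ∃ i : Fin l.length, u ∈ l[i].separator ∧ v ∈ l[i].separator := by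
  obtain ⟨S, -, T, hT, ⟨-, hST⟩, hS_not, hT_left⟩ := exists_rel_and_not_of_isChain
    (P := fun S : Separation G => ¬(u ∈ S.left ∧ v ∈ S.left)) hl.isChain hl.head?_eq
    hl.getLast?_eq (by simp) (by simp)
  have hT_left := not_not.1 hT_left
  have hS_right := (S.both_mem_or_both_mem huv).resolve_left hS_not
  have hT_right : T.right = S.right := (hST.resolve_left fun h => hS_not (h ▸ hT_left)).symm
  obtain ⟨i, hi, rfl⟩ := List.mem_iff_getElem.1 hT
  exact ⟨⟨i, hi⟩, ⟨hT_left.1, hT_right ▸ hS_right.1⟩, hT_left.2, hT_right ▸ hS_right.2⟩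

lemma getElem_le_getElem (hl : IsSweep l) {i j : Fin l.length} (hij : i ≤ j) : l[i] ≤ l[j] :=
  (Separation.pairwise_le_of_isChain_step hl.isChain).rel_get_of_le hij

/-- The path decomposition whose bags are the separators of a sweep. -/
def toPathDecomp (hl : IsSweep l) : PathDecomp G where
  n := l.length
  bag i := l[i].separator
  mem_bag v := (hl.exists_mem_separator (Or.inl rfl)).imp fun _ => And.left
  edge_bag _ _ huv := hl.exists_mem_separator (Or.inr huv)
  convex _ _ _ _ hsu hut hs ht :=
    ⟨(hl.getElem_le_getElem hsu).1 hs.1, (hl.getElem_le_getElem hut).2 ht.2⟩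

lemma width_toPathDecomp_le (hl : IsSweep l) {N : ℕ} (h : ∀ S ∈ l, S.order ≤ N) :
    hl.toPathDecomp.width ≤ N - 1 :=
  Nat.sub_le_sub_right (ciSup_le' fun i => h _ (List.getElem_mem i.2)) 1

lemma isLinked_toPathDecomp [Finite V] (hl : IsSweep l) (h_tight : IsTight l) :
    hl.toPathDecomp.IsLinked := by
  have h_linkage {s t : Fin l.length} (hst : s ≤ t) : Nonempty (Linkage G
      (sInf {k | ∃ u : Fin l.length, s ≤ u ∧ u ≤ t ∧ k = l[u].order})
      l[s].separator l[t].separator) := by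
    refine menger fun X hs ht => ?_
    have hle := hl.getElem_le_getElem hst
    obtain ⟨u, hsu, hut, hu⟩ := h_tight.exists_getElem_order_le hst (Z := (X ⊔ l[s]) ⊓ l[t])
      ⟨le_inf le_sup_right hle, inf_le_right⟩
    have h_le_X : ((X ⊔ l[s]) ⊓ l[t]).order ≤ X.order :=
      Set.ncard_le_ncard (Separation.separator_sup_inf_subset hle hs ht)
    refine (Nat.sInf_le ?_).trans (hu.trans h_le_X)
    exact ⟨u, hsu, hut, rfl⟩
  intro s t
  obtain hst | hts := le_total s t
  · rw [min_eq_left hst, max_eq_right hst]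
    exact h_linkage hst
  · rw [min_eq_right hts, max_eq_left hts]
    exact (h_linkage hts).map Linkage.symm

end IsSweep

lemma exists_width_eq_pathwidth {V : Type*} (G : SimpleGraph V) :
    ∃ D : PathDecomp G, D.width = pathwidth G :=
  Nat.sInf_mem (s := {w | ∃ D : PathDecomp G, D.width = w})
    ⟨_, { n := 1
          bag _ := Set.univ
          mem_bag _ := ⟨0, trivial⟩
          edge_bag _ _ _ := ⟨0, trivial, trivial⟩
          convex _ _ _ _ _ _ _ _ := trivial }, rfl⟩

/-- Every finite simple graph has a linked path decomposition of width exactly its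
pathwidth. -/
theorem stmt_3 {V : Type*} [Fintype V] (G : SimpleGraph V) :
    ∃ D : PathDecomp G, D.width = pathwidth G ∧ D.IsLinked := by
  obtain ⟨D, hD⟩ := exists_width_eq_pathwidth G
  obtain ⟨l, hl, h_tight, h_order⟩ := D.isSweep_cut.exists_isTight
  have h_le (S) (hS : S ∈ l) : S.order ≤ ⨆ t, (D.bag t).ncard := by
    obtain ⟨T, hT, hST⟩ := h_order S hS
    obtain ⟨m, -, rfl⟩ := List.mem_map.1 hT
    exact hST.trans (D.order_cut_le m)
  exact ⟨hl.toPathDecomp, ((hl.width_toPathDecomp_le h_le).trans_eq hD).antisymm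
    (Nat.sInf_le ⟨_, rfl⟩), hl.isLinked_toPathDecomp h_tight⟩
end
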